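/- If x ∈ (0,1) is an irrational algebraic number, then for every integer base q ≥ 2 the complexity function p(n) of its base-q digit sequence satisfies liminf_{n→∞} (p(n) − n) = +∞. -/

import Mathlib

open Filter MeasureTheory Topology
open scoped Classical

/-- The `(n+1)`-st digit (i.e. `ε_{n+1}`, `0`-indexed by `n`) of the base-`q` expansion of `x`,
chosen as the greedy expansion (never eventually equal to `q - 1`). -/
noncomputable def qdigit (q : ℕ) (x : ℝ) (n : ℕ) : ℕ :=
  (⌊x * (q : ℝ) ^ (n + 1)⌋).toNat % q

/-- The complexity function of `x` to base `q`: the number of distinct words of length `n`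
occurring as blocks of consecutive digits in the base-`q` digit sequence of `x`. -/
noncomputable def qComplexity (q : ℕ) (x : ℝ) (n : ℕ) : ℕ :=
  Set.ncard {w : Fin n → ℕ | ∃ k : ℕ, ∀ i : Fin n, qdigit q x (k + (i : ℕ)) = w i}

open Polynomial in
lemma liou (x : ℝ) (halg : IsAlgebraic ℚ x) : ∃ (d : ℕ) (X : ℝ) (l : ℕ), 0 < l ∧ 0 ≤ X ∧
    ∀ (J : ℕ) (P : ℤ[X]) (B : ℝ), 1 ≤ B → P.natDegree ≤ J →
      (∀ z : ℂ, ‖z‖ ≤ X → ‖aeval z P‖ ≤ B) → aeval x P ≠ 0 →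
      1 ≤ |aeval x P| * ((l : ℝ) ^ J * B) ^ d := by
  have hxint : IsIntegral ℚ x := halg.isIntegral
  let K := IntermediateField.adjoin ℚ {x}
  have : FiniteDimensional ℚ K := IntermediateField.adjoin.finiteDimensional hxint
  let g : K := IntermediateField.AdjoinSimple.gen ℚ x
  have hg : (g : ℝ) = x := IntermediateField.AdjoinSimple.coe_gen ℚ x
  have hgalg : IsAlgebraic ℤ g := by
    have : IsAlgebraic ℚ g := Algebra.IsAlgebraic.isAlgebraic g
    exact (IsFractionRing.isAlgebraic_iff ℤ ℚ K).2 this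
  obtain ⟨l, hl0, hl⟩ := hgalg.exists_integral_multiple
  let S : Finset (K →ₐ[ℚ] ℂ) := Finset.univ
  let σ0 : K →ₐ[ℚ] ℂ := (Complex.ofRealAm.restrictScalars ℚ).comp K.val
  have hσ0 : σ0 g = (x : ℂ) := by
    change (((g : ℝ) : ℝ) : ℂ) = (x : ℂ)
    rw [hg]
  refine ⟨Fintype.card (K →ₐ[ℚ] ℂ), ∑ σ : K →ₐ[ℚ] ℂ, ‖σ g‖, l.natAbs, Int.natAbs_pos.2 hl0,
    Finset.sum_nonneg (fun _ _ => norm_nonneg _), ?_⟩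
  intro J P B hB hJ hbd hne
  have hlr : (1 : ℝ) ≤ (l.natAbs : ℝ) := by
    exact_mod_cast Int.natAbs_pos.2 hl0
  let θ : K := (l : K) ^ J * aeval g P
  have hθ : IsIntegral ℤ θ := by
    have : θ = ∑ i ∈ Finset.range (J + 1), ((P.coeff i : ℤ) * l ^ (J - i) : ℤ) * (l • g) ^ i := by
      simp only [θ]
      rw [aeval_eq_sum_range' (Nat.lt_succ_of_le hJ), Finset.mul_sum]
      refine Finset.sum_congr rfl fun i hi => ?_
      have hi' : i ≤ J := Nat.lt_succ_iff.1 (Finset.mem_range.1 hi)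
      simp only [zsmul_eq_mul, mul_pow]
      push_cast
      rw [← Nat.sub_add_cancel hi', pow_add, Nat.add_sub_cancel]
      ring
    rw [this]
    refine IsIntegral.sum _ fun i _ => ?_
    exact (isIntegral_algebraMap (R := ℤ) (A := K) (x := _)).mul (hl.pow i)
  have hσθ : ∀ σ : K →ₐ[ℚ] ℂ, σ θ = (l : ℂ) ^ J * aeval (σ g) P := by
    intro σ
    simp only [θ, map_mul, map_pow, map_intCast]
    congr 1
    have := Polynomial.aeval_algHom_apply (σ.restrictScalars ℤ) g P
    simpa using this.symm
  have hval : σ0 θ = (l : ℂ) ^ J * ((aeval x P : ℝ) : ℂ) := by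
    rw [hσθ, hσ0]
    congr 1
    have := Polynomial.aeval_algHom_apply (Complex.ofRealAm.restrictScalars ℤ) x P
    simpa using this
  have hθ0 : θ ≠ 0 := by
    intro h
    rw [h, map_zero] at hval
    have h2 : (l : ℂ) ^ J ≠ 0 := pow_ne_zero _ (by exact_mod_cast hl0)
    have := (mul_eq_zero.1 hval.symm).resolve_left h2
    exact hne (by exact_mod_cast this)
  have hN := Algebra.isIntegral_norm ℚ hθ
  obtain ⟨N, hN⟩ := IsIntegrallyClosed.isIntegral_iff.1 hN
  have hN0 : N ≠ 0 := by
    rintro rfl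
    rw [map_zero] at hN
    exact hθ0 (Algebra.norm_eq_zero_iff.1 hN.symm)
  have hprod := Algebra.norm_eq_prod_embeddings ℚ ℂ θ
  rw [← hN] at hprod
  have h1 : (1 : ℝ) ≤ ∏ σ : K →ₐ[ℚ] ℂ, ‖σ θ‖ := by
    rw [← norm_prod, ← hprod]
    simp only [eq_intCast, map_intCast, Complex.norm_intCast]
    exact_mod_cast Int.one_le_abs hN0
  have hlB : 1 ≤ (l.natAbs : ℝ) ^ J * B := by
    have := one_le_pow₀ hlr (n := J)
    nlinarith
  have hnl : ‖(l : ℂ) ^ J‖ = (l.natAbs : ℝ) ^ J := by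
    rw [norm_pow, Complex.norm_intCast, Nat.cast_natAbs, Int.cast_abs]
  have h2 : ∀ σ : K →ₐ[ℚ] ℂ, ‖σ θ‖ ≤ (l.natAbs : ℝ) ^ J * B := by
    intro σ
    rw [hσθ, norm_mul, hnl]
    gcongr
    apply hbd
    exact Finset.single_le_sum (f := fun σ : K →ₐ[ℚ] ℂ => ‖σ g‖) (fun _ _ => norm_nonneg _)
      (Finset.mem_univ σ)
  rw [← Finset.mul_prod_erase _ _ (Finset.mem_univ σ0)] at h1
  have h3 : ∏ σ ∈ Finset.univ.erase σ0, ‖σ θ‖ ≤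
      ((l.natAbs : ℝ) ^ J * B) ^ (Finset.univ.erase σ0).card := by
    rw [← Finset.prod_const]
    exact Finset.prod_le_prod (fun _ _ => norm_nonneg _) (fun σ _ => h2 σ)
  rw [hval, norm_mul, hnl, Complex.norm_real, Real.norm_eq_abs] at h1
  have hc : (Finset.univ.erase σ0).card + 1 = Fintype.card (K →ₐ[ℚ] ℂ) := by
    rw [Finset.card_erase_add_one (Finset.mem_univ _), Finset.card_univ]
  rw [← hc, pow_succ]
  have hlJ : (0 : ℝ) ≤ (l.natAbs : ℝ) ^ J := by positivity
  calc (1 : ℝ) ≤ _ := h1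
    _ ≤ (l.natAbs : ℝ) ^ J * |aeval x P| * ((l.natAbs : ℝ) ^ J * B) ^ (Finset.univ.erase σ0).card := by
        gcongr
    _ = |aeval x P| * (((l.natAbs : ℝ) ^ J * B) ^ (Finset.univ.erase σ0).card * ((l.natAbs : ℝ) ^ J * 1)) := by ring
    _ ≤ _ := by gcongr

open Polynomial in
lemma alg_deriv_step {A R : Type*} [CommRing A] [IsDomain A] [CharZero A] [CommRing R] [IsDomain R]
    [Algebra A R] [FaithfulSMul A R]
    (dA : Derivation ℤ A A) (dR : Derivation ℤ R R)
    (hd : ∀ a, algebraMap A R (dA a) = dR (algebraMap A R a)) (g : R) (hg : IsAlgebraic A g) :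
    ∃ c ∈ Algebra.adjoin A {g}, ∃ e ∈ Algebra.adjoin A {g}, c ≠ 0 ∧ c * dR g = e := by
  have hex : ∃ n, ∃ P : A[X], P ≠ 0 ∧ aeval g P = 0 ∧ P.natDegree = n := by
    obtain ⟨P, h1, h2⟩ := hg
    exact ⟨_, P, h1, h2, rfl⟩
  obtain ⟨P, hP0, hP, hdeg⟩ := Nat.find_spec hex
  have hmin := fun m => Nat.find_min hex (m := m)
  rw [← hdeg] at hmin
  have hpos : 0 < P.natDegree := by
    rcases Nat.eq_zero_or_pos P.natDegree with h | h
    · rw [eq_C_of_natDegree_eq_zero h, aeval_C] at hP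
      rw [eq_C_of_natDegree_eq_zero h] at hP0
      rw [← map_zero (algebraMap A R)] at hP
      exact absurd (FaithfulSMul.algebraMap_injective A R hP) (fun h => hP0 (by rw [h, C_0]))
    · exact h
  have hmem : ∀ Q : A[X], aeval g Q ∈ Algebra.adjoin A {g} := fun Q =>
    Algebra.adjoin_singleton_eq_range_aeval A g ▸ ⟨Q, rfl⟩
  let Q : A[X] := ∑ i ∈ Finset.range (P.natDegree + 1), monomial i (dA (P.coeff i))
  refine ⟨aeval g (derivative P), hmem _, - aeval g Q, neg_mem (hmem _), ?_, ?_⟩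
  · intro h
    refine hmin (derivative P).natDegree (natDegree_derivative_lt hpos.ne') ⟨derivative P, ?_, h, rfl⟩
    intro h0
    exact hpos.ne' (derivative_eq_zero.1 h0)
  · have h1 : dR (aeval g P) = aeval g Q + aeval g (derivative P) * dR g := by
      conv_lhs => rw [aeval_eq_sum_range]
      have hder : derivative P = ∑ i ∈ Finset.range (P.natDegree + 1),
          monomial (i - 1) (P.coeff i * i) := by
        conv_lhs => rw [P.as_sum_range]
        simp [derivative_monomial]
      rw [hder]
      simp only [Q, map_sum, aeval_monomial, Algebra.smul_def, Derivation.leibniz, smul_eq_mul,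
        Derivation.leibniz_pow, ← hd, Finset.sum_mul, Finset.sum_add_distrib]
      rw [add_comm]
      congr 1
      · exact Finset.sum_congr rfl fun i _ => mul_comm _ _
      · refine Finset.sum_congr rfl fun i _ => ?_
        simp [nsmul_eq_mul]
        ring
    rw [hP, map_zero] at h1
    linear_combination -h1

lemma dfinite {A R : Type*} [CommRing A] [IsDomain A] [CharZero A] [CommRing R] [IsDomain R]
    [Algebra A R] [FaithfulSMul A R]
    (dA : Derivation ℤ A A) (dR : Derivation ℤ R R)
    (hd : ∀ a, algebraMap A R (dA a) = dR (algebraMap A R a)) (f : R) (hf : IsAlgebraic A f) :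
    ¬ LinearIndependent A (fun i : ℕ => dR^[i] f) := by
  let K := FractionRing A
  let L := FractionRing R
  let : Algebra K L := FractionRing.liftAlgebra A L
  have : IsScalarTower A K L := FractionRing.isScalarTower_liftAlgebra A L
  have hinj : Function.Injective (algebraMap R L) := IsFractionRing.injective R L
  have halg : ∀ g : R, IsAlgebraic K (algebraMap R L g) ↔ IsAlgebraic A g := by
    intro g
    rw [← IsFractionRing.isAlgebraic_iff A K L, isAlgebraic_algebraMap_iff hinj]
  let F := IntermediateField.adjoin K {algebraMap R L f}
  have hfin : FiniteDimensional K F :=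
    IntermediateField.adjoin.finiteDimensional ((halg f).2 hf).isIntegral
  have key : ∀ g : R, algebraMap R L g ∈ F → algebraMap R L (dR g) ∈ F := by
    intro g hg
    have hga : IsAlgebraic A g := by
      rw [← halg]
      have : IsAlgebraic K (⟨_, hg⟩ : F) := Algebra.IsAlgebraic.isAlgebraic _
      exact (isAlgebraic_algebraMap_iff (A := L) (algebraMap F L).injective).2 this
    obtain ⟨c, hc, e, he, hc0, h⟩ := alg_deriv_step dA dR hd g hga
    have hsub : ∀ t ∈ Algebra.adjoin A {g}, algebraMap R L t ∈ F := by
      intro t ht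
      induction ht using Algebra.adjoin_induction with
      | mem x hx => rw [Set.mem_singleton_iff.1 hx]; exact hg
      | algebraMap a =>
        rw [← IsScalarTower.algebraMap_apply A R L, IsScalarTower.algebraMap_apply A K L]
        exact F.algebraMap_mem _
      | add x y _ _ hx hy => rw [map_add]; exact add_mem hx hy
      | mul x y _ _ hx hy => rw [map_mul]; exact mul_mem hx hy
    have hcL : algebraMap R L c ≠ 0 := fun h0 => hc0 (hinj (by rw [h0, map_zero]))
    have : algebraMap R L (dR g) = algebraMap R L e / algebraMap R L c := by
      rw [eq_div_iff hcL, ← h, map_mul, mul_comm]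
    rw [this]
    exact div_mem (hsub e he) (hsub c hc)
  have hall : ∀ i : ℕ, algebraMap R L (dR^[i] f) ∈ F := by
    intro i
    induction i with
    | zero => exact IntermediateField.mem_adjoin_simple_self K _
    | succ n ih => rw [Function.iterate_succ_apply']; exact key _ ih
  intro hli
  have h1 : LinearIndependent A (fun i : ℕ => algebraMap R L (dR^[i] f)) := by
    have := hli.map' (IsScalarTower.toAlgHom A R L).toLinearMap (LinearMap.ker_eq_bot.2 hinj)
    exact this
  rw [LinearIndependent.iff_fractionRing A K] at h1
  have h2 : LinearIndependent K (fun i : ℕ => (⟨_, hall i⟩ : F)) := by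
    exact LinearIndependent.of_comp F.val.toLinearMap h1
  have := h2.finite
  exact not_finite ℕ

abbrev IntDer (R : Type*) [CommRing R] := Derivation ℤ R R

def mkIntDer {R : Type*} [CommRing R] (f : R →+ R) (h : ∀ a b, f (a * b) = a * f b + b * f a) : IntDer R :=
  Derivation.mk' f.toIntLinearMap h

lemma mkIntDer_apply {R : Type*} [CommRing R] (f : R →+ R) (h : ∀ a b, f (a * b) = a * f b + b * f a)
    (a : R) : mkIntDer f h a = f a := rfl

lemma intDer_mul {R : Type*} [CommRing R] (d : IntDer R) (a b : R) : d (a * b) = a * d b + b * d a := by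
  simp

lemma intDer_add {R : Type*} [CommRing R] (d : IntDer R) (a b : R) : d (a + b) = d a + d b := by
  simp

noncomputable def eulerD (r : ℕ) : IntDer (MvPowerSeries (Fin r) ℚ) :=
  mkIntDer
    { toFun := fun f γ => ((Finsupp.degree γ : ℕ) : ℚ) * MvPowerSeries.coeff γ f
      map_zero' := by
        funext γ
        change ((Finsupp.degree γ : ℕ) : ℚ) * MvPowerSeries.coeff γ (0 : MvPowerSeries (Fin r) ℚ) = 0
        simp
      map_add' := by
        intro f g; funext γ
        change _ = ((Finsupp.degree γ : ℕ) : ℚ) * MvPowerSeries.coeff γ f + ((Finsupp.degree γ : ℕ) : ℚ) * MvPowerSeries.coeff γ g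
        rw [map_add]; ring }
    (by
      intro f g
      ext γ
      change ((Finsupp.degree γ : ℕ) : ℚ) * MvPowerSeries.coeff γ (f * g) = _
      rw [map_add, mul_comm g, MvPowerSeries.coeff_mul,
        MvPowerSeries.coeff_mul, MvPowerSeries.coeff_mul, Finset.mul_sum, ← Finset.sum_add_distrib]
      refine Finset.sum_congr rfl fun p hp => ?_
      rw [← Finset.HasAntidiagonal.mem_antidiagonal.1 hp, map_add]
      change _ = MvPowerSeries.coeff p.1 f * (((Finsupp.degree p.2 : ℕ) : ℚ) * MvPowerSeries.coeff p.2 g) +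
        (((Finsupp.degree p.1 : ℕ) : ℚ) * MvPowerSeries.coeff p.1 f) * MvPowerSeries.coeff p.2 g
      push_cast
      ring)

lemma coeff_eulerD {r : ℕ} (f : MvPowerSeries (Fin r) ℚ) (γ : Fin r →₀ ℕ) :
    MvPowerSeries.coeff γ (eulerD r f) = ((Finsupp.degree γ : ℕ) : ℚ) * MvPowerSeries.coeff γ f := rfl

lemma coeff_eulerD_iter {r : ℕ} (f : MvPowerSeries (Fin r) ℚ) (γ : Fin r →₀ ℕ) (i : ℕ) :
    MvPowerSeries.coeff γ ((eulerD r)^[i] f) = ((Finsupp.degree γ : ℕ) : ℚ) ^ i * MvPowerSeries.coeff γ f := by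
  induction i with
  | zero => simp
  | succ n ih => rw [Function.iterate_succ_apply', coeff_eulerD, ih, pow_succ]; ring

lemma algMap_mv {r : ℕ} (p : MvPolynomial (Fin r) ℚ) :
    algebraMap (MvPolynomial (Fin r) ℚ) (MvPowerSeries (Fin r) ℚ) p = (p : MvPowerSeries (Fin r) ℚ) := by
  rw [MvPowerSeries.algebraMap_apply']
  simp

noncomputable def eulerA (r : ℕ) : IntDer (MvPolynomial (Fin r) ℚ) :=
  (MvPolynomial.mkDerivation ℚ (fun i : Fin r => (MvPolynomial.X i : MvPolynomial (Fin r) ℚ))).restrictScalars ℤ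

lemma euler_compat {r : ℕ} (p : MvPolynomial (Fin r) ℚ) :
    algebraMap (MvPolynomial (Fin r) ℚ) (MvPowerSeries (Fin r) ℚ) (eulerA r p) =
      eulerD r (algebraMap (MvPolynomial (Fin r) ℚ) (MvPowerSeries (Fin r) ℚ) p) := by
  induction p using MvPolynomial.induction_on with
  | C a =>
    have : eulerA r (MvPolynomial.C a) = 0 := MvPolynomial.derivation_C _ a
    rw [this, map_zero, algMap_mv, MvPolynomial.coe_C]
    ext γ
    rw [coeff_eulerD, MvPowerSeries.coeff_C]
    split_ifs with h <;> simp [h]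
  | add p q hp hq => rw [intDer_add, map_add, map_add, intDer_add, hp, hq]
  | mul_X p i hp =>
    have h1 : eulerA r (MvPolynomial.X i) = MvPolynomial.X i := MvPolynomial.mkDerivation_X ℚ _ i
    have h2 : eulerD r (MvPowerSeries.X i) = MvPowerSeries.X i := by
      ext γ
      rw [coeff_eulerD, MvPowerSeries.coeff_X]
      split_ifs with h <;> simp [h]
    rw [intDer_mul, map_mul, intDer_mul, h1, map_add, map_mul,
      map_mul, hp]
    congr 2
    rw [algMap_mv, MvPolynomial.coe_X, h2]

lemma coeff_coe_mul {r : ℕ} (B : MvPolynomial (Fin r) ℚ) (g : MvPowerSeries (Fin r) ℚ) (γ : Fin r →₀ ℕ) :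
    MvPowerSeries.coeff γ ((B : MvPowerSeries (Fin r) ℚ) * g) =
      ∑ β ∈ B.support, if β ≤ γ then MvPolynomial.coeff β B * MvPowerSeries.coeff (γ - β) g else 0 := by
  conv_lhs => rw [MvPolynomial.as_sum B]
  rw [← MvPolynomial.coeToMvPowerSeries.ringHom_apply, map_sum, Finset.sum_mul, map_sum]
  refine Finset.sum_congr rfl fun β _ => ?_
  rw [MvPolynomial.coeToMvPowerSeries.ringHom_apply, MvPolynomial.coe_monomial,
    MvPowerSeries.coeff_monomial_mul]

section wd
variable {r : ℕ} (e : Bool → (Fin r →₀ ℕ)) (ρ : Bool → ℚ)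

noncomputable def wpos (w : ℕ → Bool) (k : ℕ) : Fin r →₀ ℕ := ∑ l ∈ Finset.range k, e (w l)
noncomputable def wrho (w : ℕ → Bool) (k : ℕ) : ℚ := ∏ l ∈ Finset.range k, ρ (w l)

noncomputable def wser (w : ℕ → Bool) : MvPowerSeries (Fin r) ℚ := fun γ =>
  ∑ k ∈ Finset.range (Finsupp.degree γ + 1),
    if w k = true ∧ wpos e w k = γ then wrho ρ w k else 0

lemma wpos_add (w : ℕ → Bool) (k l : ℕ) :
    wpos e w (k + l) = wpos e w k + wpos e (fun i => w (k + i)) l := by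
  simp [wpos, Finset.sum_range_add]

lemma wrho_add (w : ℕ → Bool) (k l : ℕ) :
    wrho ρ w (k + l) = wrho ρ w k * wrho ρ (fun i => w (k + i)) l := by
  simp [wrho, Finset.prod_range_add]

lemma wpos_deg_ge (he : ∀ b, 1 ≤ Finsupp.degree (e b)) (w : ℕ → Bool) (k : ℕ) :
    k ≤ Finsupp.degree (wpos e w k) := by
  rw [wpos, map_sum]
  calc k = ∑ l ∈ Finset.range k, 1 := by simp
    _ ≤ _ := Finset.sum_le_sum fun i _ => he _

lemma wpos_deg_strict (he : ∀ b, 1 ≤ Finsupp.degree (e b)) (w : ℕ → Bool) :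
    StrictMono fun k => Finsupp.degree (wpos e w k) := by
  apply strictMono_nat_of_lt_succ
  intro k
  rw [wpos_add, map_add]
  have := wpos_deg_ge e he (fun i => w (k + i)) 1
  omega

lemma wser_pos (he : ∀ b, 1 ≤ Finsupp.degree (e b)) (w : ℕ → Bool) (k : ℕ) :
    MvPowerSeries.coeff (wpos e w k) (wser e ρ w) = if w k = true then wrho ρ w k else 0 := by
  change ∑ l ∈ Finset.range (Finsupp.degree (wpos e w k) + 1), _ = _
  rw [Finset.sum_eq_single k]
  · simp
  · intro l _ hl
    rw [if_neg]
    rintro ⟨-, h⟩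
    exact hl ((wpos_deg_strict e he w).injective (congrArg Finsupp.degree h))
  · intro h
    exact absurd (Finset.mem_range.2 (Nat.lt_succ_of_le (wpos_deg_ge e he w k))) h

lemma wser_ne (w : ℕ → Bool) (γ : Fin r →₀ ℕ) (h : MvPowerSeries.coeff γ (wser e ρ w) ≠ 0) :
    ∃ k, wpos e w k = γ := by
  by_contra! hc
  apply h
  change ∑ l ∈ Finset.range (Finsupp.degree γ + 1), _ = _
  exact Finset.sum_eq_zero fun l _ => if_neg fun h => hc l h.2

lemma wser_shift (he : ∀ b, 1 ≤ Finsupp.degree (e b)) (w : ℕ → Bool) (k : ℕ) (δ : Fin r →₀ ℕ) :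
    MvPowerSeries.coeff (wpos e w k + δ) (wser e ρ w) =
      wrho ρ w k * MvPowerSeries.coeff δ (wser e ρ (fun i => w (k + i))) := by
  by_cases h : ∃ l, wpos e (fun i => w (k + i)) l = δ
  · obtain ⟨l, rfl⟩ := h
    rw [← wpos_add, wser_pos e ρ he, wser_pos e ρ he, wrho_add]
    simp
  · have h1 : MvPowerSeries.coeff δ (wser e ρ (fun i => w (k + i))) = 0 := by
      by_contra hc
      exact h (wser_ne e ρ _ _ hc)
    rw [h1, mul_zero]
    by_contra hc
    obtain ⟨l, hl⟩ := wser_ne e ρ _ _ hc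
    have hkl : k ≤ l := by
      rw [← (wpos_deg_strict e he w).le_iff_le]
      simp only [hl, map_add]
      omega
    obtain ⟨m, rfl⟩ := Nat.exists_eq_add_of_le hkl
    rw [wpos_add] at hl
    exact h ⟨m, add_left_cancel hl⟩

lemma wser_congr (w w' : ℕ → Bool) (n : ℕ) (hw : ∀ i < n, w i = w' i) (δ : Fin r →₀ ℕ)
    (hδ : Finsupp.degree δ < n) :
    MvPowerSeries.coeff δ (wser e ρ w) = MvPowerSeries.coeff δ (wser e ρ w') := by
  change ∑ l ∈ Finset.range (Finsupp.degree δ + 1), _ = ∑ l ∈ Finset.range (Finsupp.degree δ + 1), _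
  refine Finset.sum_congr rfl fun l hl => ?_
  rw [Finset.mem_range] at hl
  have h1 : wpos e w l = wpos e w' l := Finset.sum_congr rfl fun i hi => by
    rw [hw i (by rw [Finset.mem_range] at hi; omega)]
  have h2 : wrho ρ w l = wrho ρ w' l := Finset.prod_congr rfl fun i hi => by
    rw [hw i (by rw [Finset.mem_range] at hi; omega)]
  rw [h1, h2, hw l (by omega)]

end wd

section wd2
variable {r : ℕ} (e : Bool → (Fin r →₀ ℕ)) (ρ : Bool → ℚ)

noncomputable def hcoef (v : ℕ → Bool) (δ β : Fin r →₀ ℕ) : ℚ :=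
  if β ≤ δ then MvPowerSeries.coeff (δ - β) (wser e ρ v) else 0

def wext {n : ℕ} (v : Fin n → Bool) (i : ℕ) : Bool := if h : i < n then v ⟨i, h⟩ else false

lemma struct_exists (he : ∀ b, 1 ≤ Finsupp.degree (e b)) (w : ℕ → Bool) (R : ℕ)
    (B : MvPolynomial (Fin r) ℚ) (hB : ∀ β ∈ B.support, Finsupp.degree β ≤ R) (γ : Fin r →₀ ℕ)
    (hγ : MvPowerSeries.coeff γ ((B : MvPowerSeries (Fin r) ℚ) * wser e ρ w) ≠ 0) :
    ∃ k δ, γ = wpos e w k + δ ∧ Finsupp.degree δ ≤ R ∧ ∀ β, Finsupp.degree β ≤ R →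
      hcoef e ρ w γ β = wrho ρ w k *
        hcoef e ρ (wext (fun i : Fin (R + 1) => w (k + i))) δ β := by
  have hex : ∃ k, Finsupp.degree γ ≤ Finsupp.degree (wpos e w k) + R :=
    ⟨Finsupp.degree γ, by have := wpos_deg_ge e he w (Finsupp.degree γ); omega⟩
  obtain ⟨k, hk1, hkmin⟩ : ∃ k, Finsupp.degree γ ≤ Finsupp.degree (wpos e w k) + R ∧
      ∀ l, Finsupp.degree γ ≤ Finsupp.degree (wpos e w l) + R → k ≤ l :=
    ⟨Nat.find hex, Nat.find_spec hex, fun l hl => Nat.find_min' hex hl⟩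
  have key : ∀ β, Finsupp.degree β ≤ R → β ≤ γ → MvPowerSeries.coeff (γ - β) (wser e ρ w) ≠ 0 →
      ∃ ε, γ = wpos e w k + (ε + β) := by
    intro β hβ hle hne
    obtain ⟨l, hl⟩ := wser_ne e ρ w _ hne
    have h1 : γ = wpos e w l + β := by rw [hl, tsub_add_cancel_of_le hle]
    have h2 : k ≤ l := hkmin l (by rw [h1, map_add]; omega)
    obtain ⟨m, rfl⟩ := Nat.exists_eq_add_of_le h2
    exact ⟨_, by conv_lhs => rw [h1, wpos_add, add_assoc]⟩
  rw [coeff_coe_mul] at hγ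
  obtain ⟨β, hβ, hne⟩ := Finset.exists_ne_zero_of_sum_ne_zero hγ
  have hle : β ≤ γ := by by_contra h; rw [if_neg h] at hne; exact hne rfl
  rw [if_pos hle] at hne
  obtain ⟨ε, hε⟩ := key β (hB β hβ) hle (right_ne_zero_of_mul hne)
  refine ⟨k, ε + β, hε, ?_, ?_⟩
  · have : Finsupp.degree γ = Finsupp.degree (wpos e w k) + Finsupp.degree (ε + β) := by
      conv_lhs => rw [hε, map_add]
    omega
  have hdeg : Finsupp.degree (ε + β) ≤ R := by
    have : Finsupp.degree γ = Finsupp.degree (wpos e w k) + Finsupp.degree (ε + β) := by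
      conv_lhs => rw [hε, map_add]
    omega
  intro β' hβ'
  rw [hcoef, hcoef]
  by_cases h : β' ≤ ε + β
  · have h' : β' ≤ γ := by rw [hε]; exact h.trans (le_add_of_nonneg_left (zero_le))
    rw [if_pos h, if_pos h']
    have : γ - β' = wpos e w k + ((ε + β) - β') := by
      conv_lhs => rw [hε]
      exact add_tsub_assoc_of_le h _
    rw [this, wser_shift e ρ he]
    congr 1
    apply wser_congr e ρ _ _ (R + 1)
    · intro i hi; simp [wext, hi]
    · have := Finsupp.degree_mono (tsub_le_self : (ε + β) - β' ≤ ε + β)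
      omega
  · rw [if_neg h, mul_zero]
    split_ifs with h'
    · by_contra hc
      obtain ⟨ε', hε'⟩ := key β' hβ' h' hc
      rw [hε] at hε'
      rw [add_left_cancel hε'] at h
      exact h (le_add_of_nonneg_left (zero_le))
    · rfl

theorem alg_rational (he : ∀ b, 1 ≤ Finsupp.degree (e b)) (hρ : ∀ b, ρ b ≠ 0) (w : ℕ → Bool)
    (halg : IsAlgebraic (MvPolynomial (Fin r) ℚ) (wser e ρ w)) :
    ∃ D N : MvPolynomial (Fin r) ℚ, D ≠ 0 ∧
      (D : MvPowerSeries (Fin r) ℚ) * wser e ρ w = (N : MvPowerSeries (Fin r) ℚ) := by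
  have : FaithfulSMul (MvPolynomial (Fin r) ℚ) (MvPowerSeries (Fin r) ℚ) := by
    rw [faithfulSMul_iff_algebraMap_injective]
    intro a b h
    rw [algMap_mv, algMap_mv] at h
    exact MvPolynomial.coe_injective (Fin r) ℚ h
  have : IsDomain (MvPowerSeries (Fin r) ℚ) := NoZeroDivisors.to_isDomain _
  have hdf := dfinite (eulerA r) (eulerD r) euler_compat _ halg
  rw [not_linearIndependent_iff] at hdf
  obtain ⟨s, B, hsum, i1, hi1, hB1⟩ := hdf
  -- maximal index
  have hne : (s.filter fun i => B i ≠ 0).Nonempty := ⟨i1, by simp [hi1, hB1]⟩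
  obtain ⟨i0, hi0, hmax⟩ := Finset.exists_max_image _ id hne
  rw [Finset.mem_filter] at hi0
  have hmax' : ∀ i ∈ s, i0 < i → B i = 0 := by
    intro i hi hlt
    by_contra h
    have := hmax i (by simp [hi, h])
    simp only [id] at this
    omega
  obtain ⟨R, hR⟩ : ∃ R, ∀ i ∈ s, ∀ β ∈ (B i).support, Finsupp.degree β ≤ R := by
    refine ⟨s.sup fun i => (B i).support.sup fun β => Finsupp.degree β, fun i hi β hβ => ?_⟩
    exact (Finset.le_sup (f := fun β => Finsupp.degree β) hβ).trans
      (Finset.le_sup (f := fun i => (B i).support.sup fun β => Finsupp.degree β) hi)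
  have hwr : ∀ k, wrho ρ w k ≠ 0 := fun k => Finset.prod_ne_zero_iff.2 fun i _ => hρ _
  set Γ := {γ | MvPowerSeries.coeff γ ((B i0 : MvPowerSeries (Fin r) ℚ) * wser e ρ w) ≠ 0} with hΓ
  -- the polynomial
  let p : (Fin r →₀ ℕ) → (Fin (R + 1) → Bool) → Polynomial ℚ := fun δ v =>
    ∑ i ∈ s, ∑ β ∈ (B i).support, Polynomial.C (MvPolynomial.coeff β (B i) * hcoef e ρ (wext v) δ β) *
      (Polynomial.X - Polynomial.C ((Finsupp.degree β : ℕ) : ℚ)) ^ i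
  have hcoefp : ∀ δ v, (p δ v).coeff i0 =
      ∑ β ∈ (B i0).support, MvPolynomial.coeff β (B i0) * hcoef e ρ (wext v) δ β := by
    intro δ v
    simp only [p, Polynomial.finsetSum_coeff]
    rw [Finset.sum_eq_single_of_mem i0 hi0.1]
    · refine Finset.sum_congr rfl fun β _ => ?_
      rw [Polynomial.coeff_C_mul]
      have : ((Polynomial.X - Polynomial.C ((Finsupp.degree β : ℕ) : ℚ)) ^ i0).coeff i0 = 1 := by
        have h := (Polynomial.monic_X_sub_C ((Finsupp.degree β : ℕ) : ℚ)).pow i0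
        have h2 : ((Polynomial.X - Polynomial.C ((Finsupp.degree β : ℕ) : ℚ)) ^ i0).natDegree = i0 := by
          rw [Polynomial.natDegree_pow, Polynomial.natDegree_X_sub_C, mul_one]
        rw [Polynomial.Monic, Polynomial.leadingCoeff, h2] at h
        exact h
      rw [this, mul_one]
    · intro i hi hii
      rcases lt_or_gt_of_ne hii with h | h
      · refine Finset.sum_eq_zero fun β _ => ?_
        rw [Polynomial.coeff_C_mul, Polynomial.coeff_eq_zero_of_natDegree_lt, mul_zero]
        rwa [Polynomial.natDegree_pow, Polynomial.natDegree_X_sub_C, mul_one]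
      · rw [hmax' i hi h]; simp
  have hcov : Γ ⊆ ⋃ δ ∈ {δ : Fin r →₀ ℕ | Finsupp.degree δ ≤ R}, ⋃ v ∈ {v | p δ v ≠ 0},
      Set.image (fun k => wpos e w k + δ)
        {k | (p δ v).eval (((Finsupp.degree (wpos e w k) + Finsupp.degree δ : ℕ)) : ℚ) = 0} := by
    intro γ hγ
    obtain ⟨k, δ, hγk, hδ, hst⟩ := struct_exists e ρ he w R (B i0) (hR i0 hi0.1) γ hγ
    simp only [Set.mem_iUnion]
    refine ⟨δ, hδ, fun i => w (k + i), ?_, k, ?_, hγk.symm⟩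
    · intro hp
      apply hγ
      rw [coeff_coe_mul]
      have h0 := hcoefp δ (fun i => w (k + i))
      rw [hp, Polynomial.coeff_zero] at h0
      refine Eq.trans ?_ ((congrArg (fun t => wrho ρ w k * t) h0.symm).trans (mul_zero (wrho ρ w k)))
      rw [Finset.mul_sum]
      refine Finset.sum_congr rfl fun β hβ => ?_
      have := hst β (hR i0 hi0.1 β hβ)
      rw [mul_left_comm, ← this, hcoef, mul_ite, mul_zero]
    · have h1 : MvPowerSeries.coeff γ (∑ i ∈ s, B i • (eulerD r)^[i] (wser e ρ w)) = 0 := by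
        rw [hsum, map_zero]
      have hdegγ : Finsupp.degree (wpos e w k) + Finsupp.degree δ = Finsupp.degree γ := by
        rw [hγk, map_add]
      change Polynomial.eval _ _ = 0
      rw [hdegγ]
      have h2 : wrho ρ w k * (p δ fun i => w (k + i)).eval ((Finsupp.degree γ : ℕ) : ℚ) = 0 := by
        rw [← h1, map_sum]
        simp only [p, Polynomial.eval_finsetSum, Finset.mul_sum]
        refine Finset.sum_congr rfl fun i hi => ?_
        rw [Algebra.smul_def, algMap_mv, coeff_coe_mul]
        refine Finset.sum_congr rfl fun β hβ => ?_
        have := hst β (hR i hi β hβ)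
        simp only [Polynomial.eval_mul, Polynomial.eval_C, Polynomial.eval_pow, Polynomial.eval_sub,
          Polynomial.eval_X]
        have h3 : wrho ρ w k * (MvPolynomial.coeff β (B i) * hcoef e ρ (wext fun i : Fin (R+1) => w (k + i)) δ β *
          (((Finsupp.degree γ : ℕ) : ℚ) - ((Finsupp.degree β : ℕ) : ℚ)) ^ i) =
          MvPolynomial.coeff β (B i) * hcoef e ρ w γ β * 
          (((Finsupp.degree γ : ℕ) : ℚ) - ((Finsupp.degree β : ℕ) : ℚ)) ^ i := by rw [this]; ring
        rw [h3, hcoef]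
        split_ifs with hle
        · rw [coeff_eulerD_iter]
          have : ((Finsupp.degree γ : ℕ) : ℚ) = ((Finsupp.degree (γ - β) : ℕ) : ℚ) + ((Finsupp.degree β : ℕ) : ℚ) := by
            rw [← Nat.cast_add, ← map_add, tsub_add_cancel_of_le hle]
          rw [this]; ring
        · simp
      exact (mul_eq_zero.1 h2).resolve_left (hwr k)
  have hfin : Γ.Finite := by
    refine Set.Finite.subset ?_ hcov
    refine Set.Finite.biUnion (Finsupp.finite_of_degree_le R) fun δ _ => ?_
    refine Set.Finite.biUnion (Set.toFinite _) fun v hv => ?_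
    refine Set.Finite.image _ ?_
    have h1 : {t : ℚ | (p δ v).IsRoot t}.Finite := Polynomial.finite_setOfPred_isRoot hv
    refine Set.Finite.preimage (f := fun k => (((Finsupp.degree (wpos e w k) + Finsupp.degree δ : ℕ)) : ℚ)) ?_ h1
    intro a _ b _ hab
    simp only [Nat.cast_inj, add_left_inj] at hab
    exact (wpos_deg_strict e he w).injective hab
  refine ⟨B i0, ∑ γ ∈ hfin.toFinset, MvPolynomial.monomial γ
    (MvPowerSeries.coeff γ ((B i0 : MvPowerSeries (Fin r) ℚ) * wser e ρ w)), hi0.2, ?_⟩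
  ext γ
  rw [MvPolynomial.coeff_coe, MvPolynomial.coeff_sum]
  simp only [MvPolynomial.coeff_monomial, Finset.sum_ite_eq', Set.Finite.mem_toFinset]
  by_cases h : γ ∈ Γ
  · rw [if_pos h]
  · rw [if_neg h]
    by_contra hc
    exact h hc
end wd2

lemma low1 (x : ℝ) (halg : IsAlgebraic ℚ x) : ∃ d : ℕ, ∀ J : ℕ, ∃ C : ℝ, 0 < C ∧
    ∀ (a : ℕ → ℤ) (g h κ : ℤ) (y W V : ℝ), 1 ≤ W → 1 ≤ V → (∀ j, |(a j : ℝ)| ≤ W) →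
      |(g : ℝ)| ≤ V → |(h : ℝ)| ≤ V → |(κ : ℝ)| ≤ V → κ ≠ 0 → κ * y = g * x + h →
      (∑ j ∈ Finset.range (J + 1), (a j : ℝ) * y ^ j) ≠ 0 →
      C ≤ |∑ j ∈ Finset.range (J + 1), (a j : ℝ) * y ^ j| * (W * V ^ J) ^ (d + 1) := by
  obtain ⟨d, X, l, hl, hX, H⟩ := liou x halg
  refine ⟨d, fun J => ?_⟩
  set C1 : ℝ := (l : ℝ) ^ J * ((J + 1) * (X + 1) ^ J) with hC1
  have hl' : (0 : ℝ) < l := by exact_mod_cast hl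
  have hC1p : 0 < C1 := by positivity
  refine ⟨(C1 ^ d)⁻¹, by positivity, ?_⟩
  intro a g h κ y W V hW hV ha hg hh hκ hκ0 hy hne
  let Q : Polynomial ℤ := ∑ j ∈ Finset.range (J + 1),
    Polynomial.C (a j * κ ^ (J - j)) * (Polynomial.C g * Polynomial.X + Polynomial.C h) ^ j
  have hκ0' : (κ : ℝ) ≠ 0 := by exact_mod_cast hκ0
  have hQx : Polynomial.aeval x Q = (κ : ℝ) ^ J * ∑ j ∈ Finset.range (J + 1), (a j : ℝ) * y ^ j := by
    simp only [Q, map_sum, map_mul, map_pow, map_add, Polynomial.aeval_X,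
      eq_intCast, map_intCast]
    rw [← hy, Finset.mul_sum]
    refine Finset.sum_congr rfl fun j hj => ?_
    rw [Finset.mem_range] at hj
    rw [mul_pow, ← Nat.sub_add_cancel (show j ≤ J by omega), pow_add]
    simp only [Nat.add_sub_cancel]
    ring
  have hdeg : Q.natDegree ≤ J := by
    refine Polynomial.natDegree_sum_le_of_forall_le _ _ fun j hj => ?_
    rw [Finset.mem_range] at hj
    refine (Polynomial.natDegree_C_mul_le _ _).trans (Polynomial.natDegree_pow_le.trans ?_)
    have : (Polynomial.C g * Polynomial.X + Polynomial.C h).natDegree ≤ 1 :=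
      Polynomial.natDegree_linear_le
    nlinarith
  set B : ℝ := ((J + 1) * (X + 1) ^ J) * (W * V ^ J) with hB
  have hVJ : 1 ≤ V ^ J := one_le_pow₀ hV
  have hXJ : 1 ≤ (X + 1) ^ J := one_le_pow₀ (by linarith)
  have hB1 : 1 ≤ B := by
    have h1 : 1 ≤ W * V ^ J := by nlinarith
    have h2 : 1 ≤ ((J : ℝ) + 1) * (X + 1) ^ J := by
      have : (0 : ℝ) ≤ J := by positivity
      nlinarith
    nlinarith
  have hbd : ∀ z : ℂ, ‖z‖ ≤ X → ‖Polynomial.aeval z Q‖ ≤ B := by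
    intro z hz
    simp only [Q, map_sum, map_mul, map_pow, map_add, Polynomial.aeval_X,
      eq_intCast, map_intCast]
    refine (norm_sum_le _ _).trans ?_
    have hterm : ∀ j ∈ Finset.range (J + 1),
        ‖((a j : ℂ) * (κ : ℂ) ^ (J - j)) * ((g : ℂ) * z + (h : ℂ)) ^ j‖ ≤ (X + 1) ^ J * (W * V ^ J) := by
      intro j hj
      rw [Finset.mem_range] at hj
      rw [norm_mul, norm_mul, norm_pow, norm_pow]
      have e1 : ‖(a j : ℂ)‖ ≤ W := by rw [Complex.norm_intCast]; exact ha j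
      have e2 : ‖(κ : ℂ)‖ ≤ V := by rw [Complex.norm_intCast]; exact hκ
      have e3 : ‖(g : ℂ) * z + (h : ℂ)‖ ≤ V * (X + 1) := by
        refine (norm_add_le _ _).trans ?_
        rw [norm_mul, Complex.norm_intCast, Complex.norm_intCast]
        have := mul_le_mul hg hz (norm_nonneg _) (by linarith)
        linarith
      have hX1 : (X + 1) ^ j ≤ (X + 1) ^ J := pow_le_pow_right₀ (by linarith) (by omega)
      calc _ ≤ W * V ^ (J - j) * (V * (X + 1)) ^ j := by gcongr
        _ = (X + 1) ^ j * (W * V ^ J) := by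
          rw [mul_pow, ← Nat.sub_add_cancel (show j ≤ J by omega), pow_add]
          simp only [Nat.add_sub_cancel]
          ring
        _ ≤ _ := by gcongr
    refine (Finset.sum_le_sum hterm).trans ?_
    rw [Finset.sum_const, Finset.card_range, nsmul_eq_mul, hB]
    push_cast
    apply le_of_eq; ring
  have hmain := H J Q B hB1 hdeg hbd (by rw [hQx]; exact mul_ne_zero (pow_ne_zero _ hκ0') hne)
  rw [hQx, abs_mul, abs_pow] at hmain
  set S := |∑ j ∈ Finset.range (J + 1), (a j : ℝ) * y ^ j|
  rw [inv_le_iff_one_le_mul₀ (by positivity)]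
  have hκJ : |(κ : ℝ)| ^ J ≤ W * V ^ J := by
    calc |(κ : ℝ)| ^ J ≤ V ^ J := by gcongr
      _ ≤ W * V ^ J := by nlinarith
  have e : (l : ℝ) ^ J * B = C1 * (W * V ^ J) := by rw [hB, hC1]; ring
  rw [e, mul_pow] at hmain
  calc 1 ≤ _ := hmain
    _ ≤ (W * V ^ J) * S * (C1 ^ d * (W * V ^ J) ^ d) := by gcongr
    _ = _ := by ring

noncomputable def evP {r : ℕ} (s : Fin r → ℝ) (y : ℝ) (P : Polynomial (MvPolynomial (Fin r) ℚ)) : ℝ :=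
  P.eval₂ ((MvPolynomial.aeval s : MvPolynomial (Fin r) ℚ →ₐ[ℚ] ℝ) : MvPolynomial (Fin r) ℚ →+* ℝ) y

lemma evP_sum {r : ℕ} (s : Fin r → ℝ) (y : ℝ) (P : Polynomial (MvPolynomial (Fin r) ℚ)) (J : ℕ)
    (hJ : P.natDegree ≤ J) :
    evP s y P = ∑ j ∈ Finset.range (J + 1), MvPolynomial.aeval s (P.coeff j) * y ^ j := by
  rw [evP, Polynomial.eval₂_eq_sum_range' _ (Nat.lt_succ_of_le hJ)]
  rfl

/-- weight -/
def mw {r : ℕ} (m : Fin r → ℕ) (γ : Fin r →₀ ℕ) : ℕ := ∑ i, γ i * m i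

noncomputable def sv (q : ℕ) {r : ℕ} (m : Fin r → ℕ) (i : Fin r) : ℝ := ((q : ℝ) ^ m i)⁻¹

lemma sv_mon (q : ℕ) {r : ℕ} (m : Fin r → ℕ) (γ : Fin r →₀ ℕ) :
    ∏ i, sv q m i ^ γ i = ((q : ℝ) ^ mw m γ)⁻¹ := by
  simp only [sv, mw, inv_pow, ← pow_mul, ← Finset.prod_pow_eq_pow_sum, Finset.prod_inv_distrib]
  congr 1
  refine Finset.prod_congr rfl fun i _ => by rw [mul_comm]

lemma aeval_sv (q : ℕ) {r : ℕ} (m : Fin r → ℕ) (G : MvPolynomial (Fin r) ℚ) :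
    MvPolynomial.aeval (sv q m) G = ∑ γ ∈ G.support, ((MvPolynomial.coeff γ G : ℚ) : ℝ) * ((q : ℝ) ^ mw m γ)⁻¹ := by
  rw [MvPolynomial.aeval_def, MvPolynomial.eval₂_eq']
  refine Finset.sum_congr rfl fun γ _ => ?_
  rw [sv_mon]; rfl

lemma mw_le {r : ℕ} (m : Fin r → ℕ) (b : ℕ) (hm : ∀ i, m i ≤ b) (γ : Fin r →₀ ℕ) :
    mw m γ ≤ Finsupp.degree γ * b := by
  rw [Finsupp.degree_eq_sum, mw, Finset.sum_mul]
  exact Finset.sum_le_sum fun i _ => Nat.mul_le_mul_left _ (hm i)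

lemma le_mw {r : ℕ} (m : Fin r → ℕ) (b : ℕ) (hm : ∀ i, b ≤ m i) (γ : Fin r →₀ ℕ) :
    Finsupp.degree γ * b ≤ mw m γ := by
  rw [Finsupp.degree_eq_sum, mw, Finset.sum_mul]
  exact Finset.sum_le_sum fun i _ => Nat.mul_le_mul_left _ (hm i)

/-- common denominators -/
lemma common_den (S : Finset ℚ) : ∃ Δ : ℕ, 0 < Δ ∧ ∀ t ∈ S, ∃ z : ℤ, (Δ : ℚ) * t = z := by
  refine ⟨∏ t ∈ S, t.den, Finset.prod_pos fun t _ => t.den_pos, fun t ht => ?_⟩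
  obtain ⟨k, hk⟩ := Finset.dvd_prod_of_mem (fun t : ℚ => t.den) ht
  refine ⟨k * t.num, ?_⟩
  rw [hk]; push_cast
  have := Rat.mul_den_eq_num t
  rw [← this]; ring

lemma low2 (x : ℝ) (halg : IsAlgebraic ℚ x) (q : ℕ) (hq : 2 ≤ q) (c : ℕ) : ∃ c0 : ℕ, 0 < c0 ∧
    ∀ (r J N : ℕ) (P : Polynomial (MvPolynomial (Fin r) ℚ)), P.natDegree ≤ J →
      (∀ j, ∀ γ ∈ (P.coeff j).support, Finsupp.degree γ ≤ N) → ∃ C : ℝ, 0 < C ∧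
      ∀ (H : ℕ) (m : Fin r → ℕ) (g h κ : ℤ) (y : ℝ), (∀ i, m i ≤ c * H) →
        |(g : ℝ)| ≤ (q : ℝ) ^ (c * H) → |(h : ℝ)| ≤ (q : ℝ) ^ (c * H) → |(κ : ℝ)| ≤ (q : ℝ) ^ (c * H) →
        κ ≠ 0 → κ * y = g * x + h → evP (sv q m) y P ≠ 0 →
        C ≤ |evP (sv q m) y P| * (q : ℝ) ^ (c0 * (N + J) * H) := by
  obtain ⟨d, hd⟩ := low1 x halg
  refine ⟨c * (d + 2) + 1, Nat.succ_pos _, fun r J N P hJ hN => ?_⟩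
  obtain ⟨C, hC, hmain⟩ := hd J
  obtain ⟨Δ, hΔ, hden⟩ := common_den
    ((Finset.range (J + 1)).biUnion fun j => (P.coeff j).support.image fun γ => MvPolynomial.coeff γ (P.coeff j))
  have hden' : ∀ j γ, ∃ z : ℤ, (Δ : ℚ) * MvPolynomial.coeff γ (P.coeff j) = z := by
    intro j γ
    by_cases hj : j ≤ J
    · by_cases hγ : γ ∈ (P.coeff j).support
      · apply hden
        rw [Finset.mem_biUnion]
        exact ⟨j, by simp; omega, Finset.mem_image_of_mem _ hγ⟩
      · rw [MvPolynomial.notMem_support_iff.1 hγ]; exact ⟨0, by simp⟩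
    · rw [Polynomial.coeff_eq_zero_of_natDegree_lt (by omega)]; exact ⟨0, by simp⟩
  choose z hz using hden'
  have hz' : ∀ j γ, (z j γ : ℝ) = Δ * ((MvPolynomial.coeff γ (P.coeff j) : ℚ) : ℝ) := by
    intro j γ
    have := congrArg (fun t : ℚ => (t : ℝ)) (hz j γ)
    push_cast at this
    exact this.symm
  set C1 : ℝ := 1 + ∑ j ∈ Finset.range (J + 1), ∑ γ ∈ (P.coeff j).support, |(z j γ : ℝ)| with hC1
  have hC11 : 1 ≤ C1 := by
    have : 0 ≤ ∑ j ∈ Finset.range (J + 1), ∑ γ ∈ (P.coeff j).support, |(z j γ : ℝ)| :=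
      Finset.sum_nonneg fun _ _ => Finset.sum_nonneg fun _ _ => abs_nonneg _
    linarith
  have hΔ' : (0 : ℝ) < Δ := by exact_mod_cast hΔ
  have hC1p : 0 < C1 := by linarith
  refine ⟨C / (Δ * C1 ^ (d + 1)), by positivity, ?_⟩
  intro H m g h κ y hm hg hh hκ hκ0 hy hne
  have hq1 : (1 : ℝ) ≤ q := by exact_mod_cast (by omega : 1 ≤ q)
  have hq0 : (q : ℝ) ≠ 0 := by positivity
  have hmw : ∀ j, ∀ γ ∈ (P.coeff j).support, mw m γ ≤ N * (c * H) := fun j γ hγ =>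
    (mw_le m _ hm γ).trans (Nat.mul_le_mul_right _ (hN j γ hγ))
  let a : ℕ → ℤ := fun j => if j ≤ J then ∑ γ ∈ (P.coeff j).support, z j γ * (q : ℤ) ^ (N * (c * H) - mw m γ) else 0
  have haeq : ∀ j ≤ J, (a j : ℝ) = Δ * (q : ℝ) ^ (N * (c * H)) * MvPolynomial.aeval (sv q m) (P.coeff j) := by
    intro j hj
    simp only [a, if_pos hj]
    push_cast
    rw [aeval_sv, Finset.mul_sum]
    refine Finset.sum_congr rfl fun γ hγ => ?_
    rw [hz', pow_sub₀ _ hq0 (hmw j γ hγ)]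
    ring
  set W : ℝ := C1 * (q : ℝ) ^ (N * (c * H)) with hW
  have hqp : (1 : ℝ) ≤ (q : ℝ) ^ (N * (c * H)) := one_le_pow₀ hq1
  have haW : ∀ j, |(a j : ℝ)| ≤ W := by
    intro j
    by_cases hj : j ≤ J
    · simp only [a, if_pos hj]
      push_cast
      refine (Finset.abs_sum_le_sum_abs _ _).trans ?_
      calc ∑ γ ∈ (P.coeff j).support, |(z j γ : ℝ) * (q : ℝ) ^ (N * (c * H) - mw m γ)|
          ≤ ∑ γ ∈ (P.coeff j).support, |(z j γ : ℝ)| * (q : ℝ) ^ (N * (c * H)) := by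
            refine Finset.sum_le_sum fun γ _ => ?_
            rw [abs_mul, abs_of_nonneg (a := (q : ℝ) ^ _) (by positivity)]
            gcongr
            omega
        _ = (∑ γ ∈ (P.coeff j).support, |(z j γ : ℝ)|) * (q : ℝ) ^ (N * (c * H)) := by
            rw [Finset.sum_mul]
        _ ≤ W := by
            rw [hW]
            gcongr
            have := Finset.single_le_sum (f := fun j => ∑ γ ∈ (P.coeff j).support, |(z j γ : ℝ)|)
              (fun _ _ => Finset.sum_nonneg fun _ _ => abs_nonneg _)
              (show j ∈ Finset.range (J + 1) by simp; omega)
            linarith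
    · simp only [a, if_neg hj]
      simp only [Int.cast_zero, abs_zero]
      positivity
  have hsum : ∑ j ∈ Finset.range (J + 1), (a j : ℝ) * y ^ j =
      Δ * (q : ℝ) ^ (N * (c * H)) * evP (sv q m) y P := by
    rw [evP_sum _ _ _ J hJ, Finset.mul_sum]
    refine Finset.sum_congr rfl fun j hj => ?_
    rw [Finset.mem_range] at hj
    rw [haeq j (by omega)]; ring
  have := hmain a g h κ y W ((q : ℝ) ^ (c * H)) (by nlinarith) (one_le_pow₀ hq1) haW hg hh hκ hκ0 hy
    (by rw [hsum]; exact mul_ne_zero (by positivity) hne)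
  rw [hsum, abs_mul, abs_of_nonneg (a := (Δ : ℝ) * _) (by positivity)] at this
  rw [div_le_iff₀ (by positivity)]
  refine this.trans ?_
  set S := |evP (sv q m) y P|
  have e : (Δ : ℝ) * (q : ℝ) ^ (N * (c * H)) * S * (W * ((q : ℝ) ^ (c * H)) ^ J) ^ (d + 1) =
    S * (q : ℝ) ^ (N * (c * H) + (N * (c * H) + c * H * J) * (d + 1)) * (Δ * C1 ^ (d + 1)) := by
    rw [hW]
    rw [pow_add (q : ℝ) (N * (c * H)), pow_mul (q : ℝ) (N * (c * H) + c * H * J), pow_add (q : ℝ) (N * (c * H)),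
      ← pow_mul (q : ℝ) (c * H) J]
    ring_nf
  rw [e]
  gcongr
  · have h1 : N * (c * H) ≤ (N + J) * (c * H) := Nat.mul_le_mul_right _ (by omega)
    have h2 : N * (c * H) + c * H * J = (N + J) * (c * H) := by ring
    rw [h2]
    have h3 : (c * (d + 2) + 1) * (N + J) * H = (N + J) * (c * H) + (N + J) * (c * H) * (d + 1) + (N + J) * H := by ring
    rw [h3]
    omega

lemma uf_exists {α : Type*} (𝓤 : Ultrafilter ℕ) (S : Finset α) (p : ℕ → α → Prop)
    (h : ∀ᶠ n in (𝓤 : Filter ℕ), ∃ a ∈ S, p n a) : ∃ a ∈ S, ∀ᶠ n in (𝓤 : Filter ℕ), p n a := by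
  by_contra! hc
  have h2 : ∀ a ∈ S, ∀ᶠ n in (𝓤 : Filter ℕ), ¬ p n a := fun a ha =>
hc a ha
  have h3 := (Finset.eventually_all S).2 h2
  obtain ⟨n, ⟨a, ha, hp⟩, hn⟩ := (h.and h3).exists
  exact hn a ha hp

section gen
variable {r : ℕ}

lemma nv (q : ℕ) (hq : 2 ≤ q) (𝓤 : Ultrafilter ℕ) (m : ℕ → Fin r → ℕ)
    (hres : ∀ γ γ' : Fin r →₀ ℕ, γ ≠ γ' → ∀ C : ℕ, ∀ᶠ n in (𝓤 : Filter ℕ),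
      mw (m n) γ + C < mw (m n) γ' ∨ mw (m n) γ' + C < mw (m n) γ)
    (G : MvPolynomial (Fin r) ℚ) (γ : Fin r →₀ ℕ) (hγ : γ ∈ G.support) :
    ∃ c' : ℝ, 0 < c' ∧ ∀ᶠ n in (𝓤 : Filter ℕ),
      c' * ((q : ℝ) ^ mw (m n) γ)⁻¹ ≤ |MvPolynomial.aeval (sv q (m n)) G| := by
  obtain ⟨γ0, hγ0, hdom⟩ := uf_exists 𝓤 G.support (fun n a => ∀ b ∈ G.support, mw (m n) a ≤ mw (m n) b)
    (Filter.Eventually.of_forall fun n => Finset.exists_min_image _ _ ⟨γ, hγ⟩)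
  have hc0 : ((MvPolynomial.coeff γ0 G : ℚ) : ℝ) ≠ 0 := by
    exact_mod_cast MvPolynomial.mem_support_iff.1 hγ0
  set a0 : ℝ := |((MvPolynomial.coeff γ0 G : ℚ) : ℝ)| with ha0
  have ha0p : 0 < a0 := abs_pos.2 hc0
  set Sg : ℝ := ∑ β ∈ G.support.erase γ0, |((MvPolynomial.coeff β G : ℚ) : ℝ)| with hSg
  have hSg0 : 0 ≤ Sg := Finset.sum_nonneg fun _ _ => abs_nonneg _
  have hq1 : (1 : ℝ) < q := by exact_mod_cast (by omega : 1 < q)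
  obtain ⟨C, hC⟩ : ∃ C : ℕ, 2 * Sg / a0 < (q : ℝ) ^ C := pow_unbounded_of_one_lt _ hq1
  have hev : ∀ᶠ n in (𝓤 : Filter ℕ), ∀ β ∈ G.support.erase γ0,
      mw (m n) γ0 + C < mw (m n) β ∨ mw (m n) β + C < mw (m n) γ0 :=
    (Finset.eventually_all _).2 fun β hβ => hres γ0 β (Finset.ne_of_mem_erase hβ).symm C
  refine ⟨a0 / 2, by positivity, ?_⟩
  filter_upwards [hdom, hev] with n h1 h2
  have hqC : (0 : ℝ) < (q : ℝ) ^ C := by positivity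
  set t : ℝ := ((q : ℝ) ^ mw (m n) γ0)⁻¹ with ht
  have htp : 0 < t := by positivity
  have hγt : ((q : ℝ) ^ mw (m n) γ)⁻¹ ≤ t := by
    rw [ht]
    gcongr
    · exact hq1.le
    · exact h1 γ hγ
  rw [aeval_sv, ← Finset.add_sum_erase _ _ hγ0]
  have hrest : |∑ β ∈ G.support.erase γ0, ((MvPolynomial.coeff β G : ℚ) : ℝ) * ((q : ℝ) ^ mw (m n) β)⁻¹| ≤
      Sg * (t / (q : ℝ) ^ C) := by
    refine (Finset.abs_sum_le_sum_abs _ _).trans ?_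
    rw [hSg, Finset.sum_mul]
    refine Finset.sum_le_sum fun β hβ => ?_
    rw [abs_mul, abs_of_nonneg (a := ((q : ℝ) ^ mw (m n) β)⁻¹) (by positivity)]
    refine mul_le_mul_of_nonneg_left ?_ (abs_nonneg _)
    have : mw (m n) γ0 + C < mw (m n) β := by
      rcases h2 β hβ with h | h
      · exact h
      · have := h1 β (Finset.mem_of_mem_erase hβ); omega
    rw [ht, div_eq_mul_inv, ← mul_inv, ← pow_add]
    gcongr
    exact hq1.le
  have hsm : Sg * (t / (q : ℝ) ^ C) ≤ a0 / 2 * t := by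
    rw [div_lt_iff₀ ha0p] at hC
    rw [mul_div_assoc', div_le_iff₀ hqC]
    nlinarith
  have hm0 : |((MvPolynomial.coeff γ0 G : ℚ) : ℝ) * t| = a0 * t := by
    rw [abs_mul, abs_of_pos htp]
  have htri := abs_sub_abs_le_abs_add (((MvPolynomial.coeff γ0 G : ℚ) : ℝ) * t)
    (∑ β ∈ G.support.erase γ0, ((MvPolynomial.coeff β G : ℚ) : ℝ) * ((q : ℝ) ^ mw (m n) β)⁻¹)
  rw [hm0] at htri
  have : a0 / 2 * ((q : ℝ) ^ mw (m n) γ)⁻¹ ≤ a0 / 2 * t := by gcongr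
  linarith

/-- low order vanishing -/
def lowv (M : ℕ) (g : MvPowerSeries (Fin r) ℚ) : Prop :=
  ∀ γ, Finsupp.degree γ < M → MvPowerSeries.coeff γ g = 0

lemma lowv_mul (M : ℕ) (g h : MvPowerSeries (Fin r) ℚ) (hg : lowv M g) : lowv M (g * h) := by
  intro γ hγ
  rw [MvPowerSeries.coeff_mul]
  refine Finset.sum_eq_zero fun p hp => ?_
  rw [hg p.1, zero_mul]
  have := Finset.HasAntidiagonal.mem_antidiagonal.1 hp
  have h2 : Finsupp.degree γ = Finsupp.degree p.1 + Finsupp.degree p.2 := by rw [← this, map_add]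
  omega

variable (e : Bool → (Fin r →₀ ℕ)) (ρ : Bool → ℚ) (w : ℕ → Bool)

noncomputable def wtr (K : ℕ) : MvPolynomial (Fin r) ℚ :=
  ∑ k ∈ Finset.range K, if w k = true then MvPolynomial.monomial (wpos e w k) (wrho ρ w k) else 0

lemma wtr_low (he : ∀ b, 1 ≤ Finsupp.degree (e b)) (K : ℕ) :
    lowv K (wser e ρ w - (wtr e ρ w K : MvPowerSeries (Fin r) ℚ)) := by
  intro γ hγ
  rw [map_sub, sub_eq_zero, MvPolynomial.coeff_coe, wtr, MvPolynomial.coeff_sum]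
  have h1 : ∀ k, MvPolynomial.coeff γ
      (if w k = true then MvPolynomial.monomial (wpos e w k) (wrho ρ w k) else 0) =
      if w k = true ∧ wpos e w k = γ then wrho ρ w k else 0 := by
    intro k
    by_cases h : w k = true
    · simp [h, MvPolynomial.coeff_monomial]
    · simp [h]
  simp only [h1]
  change ∑ l ∈ Finset.range (Finsupp.degree γ + 1), _ = _
  refine Finset.sum_subset (fun k hk => ?_) fun k _ hk => ?_
  · rw [Finset.mem_range] at *; omega
  · rw [if_neg]
    rintro ⟨-, h⟩
    have := wpos_deg_ge e he w k
    rw [h] at this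
    rw [Finset.mem_range] at hk
    omega

lemma eval_low (he : ∀ b, 1 ≤ Finsupp.degree (e b)) (K : ℕ) (P : Polynomial (MvPolynomial (Fin r) ℚ)) :
    lowv K (Polynomial.aeval (wser e ρ w) P - ((P.eval (wtr e ρ w K) : MvPolynomial (Fin r) ℚ) : MvPowerSeries (Fin r) ℚ)) := by
  have h1 : ((P.eval (wtr e ρ w K) : MvPolynomial (Fin r) ℚ) : MvPowerSeries (Fin r) ℚ) =
      Polynomial.aeval ((wtr e ρ w K : MvPolynomial (Fin r) ℚ) : MvPowerSeries (Fin r) ℚ) P := by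
    rw [← algMap_mv, ← algMap_mv, Polynomial.aeval_algebraMap_apply, Polynomial.coe_aeval_eq_eval]
  rw [h1]
  have h2 := Polynomial.sub_dvd_eval_sub (wser e ρ w) ((wtr e ρ w K : MvPolynomial (Fin r) ℚ) : MvPowerSeries (Fin r) ℚ)
    (P.map (algebraMap _ (MvPowerSeries (Fin r) ℚ)))
  rw [Polynomial.eval_map_algebraMap, Polynomial.eval_map_algebraMap] at h2
  obtain ⟨g, hg⟩ := h2
  rw [hg]
  exact lowv_mul K _ _ (wtr_low e ρ w he K)

end gen

section gen3
variable {r : ℕ}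

lemma poly_upper (q : ℕ) (hq : 2 ≤ q) (M : ℕ) (G : MvPolynomial (Fin r) ℚ)
    (hG : lowv M (G : MvPowerSeries (Fin r) ℚ)) : ∃ C : ℝ, 0 ≤ C ∧ ∀ (H : ℕ) (m : Fin r → ℕ),
      (∀ i, H ≤ m i) → |MvPolynomial.aeval (sv q m) G| ≤ C * ((q : ℝ) ^ (M * H))⁻¹ := by
  refine ⟨∑ γ ∈ G.support, |((MvPolynomial.coeff γ G : ℚ) : ℝ)|, Finset.sum_nonneg fun _ _ => abs_nonneg _, ?_⟩
  intro H m hm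
  have hq1 : (1 : ℝ) ≤ q := by exact_mod_cast (by omega : 1 ≤ q)
  rw [aeval_sv, Finset.sum_mul]
  refine (Finset.abs_sum_le_sum_abs _ _).trans (Finset.sum_le_sum fun γ hγ => ?_)
  rw [abs_mul, abs_of_nonneg (a := ((q : ℝ) ^ mw m γ)⁻¹) (by positivity)]
  refine mul_le_mul_of_nonneg_left ?_ (abs_nonneg _)
  have h1 : M ≤ Finsupp.degree γ := by
    by_contra hc
    have := hG γ (by omega)
    rw [MvPolynomial.coeff_coe] at this
    exact MvPolynomial.mem_support_iff.1 hγ this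
  have h2 : M * H ≤ mw m γ := (Nat.mul_le_mul_right _ h1).trans (le_mw m H hm γ)
  gcongr

lemma evP_lip (q : ℕ) (hq : 2 ≤ q) (P : Polynomial (MvPolynomial (Fin r) ℚ)) (R : ℝ) (hR : 0 ≤ R) :
    ∃ C : ℝ, 0 ≤ C ∧ ∀ (m : Fin r → ℕ) (y y' : ℝ), |y| ≤ R → |y'| ≤ R →
      |evP (sv q m) y P - evP (sv q m) y' P| ≤ C * |y - y'| := by
  have h0 : ∀ j, ∃ C : ℝ, 0 ≤ C ∧ ∀ (m : Fin r → ℕ), |MvPolynomial.aeval (sv q m) (P.coeff j)| ≤ C := by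
    intro j
    obtain ⟨C, hC, h⟩ := poly_upper q hq 0 (P.coeff j) (fun γ h => absurd h (by omega))
    refine ⟨C, hC, fun m => ?_⟩
    have := h 0 m (fun _ => Nat.zero_le _)
    simpa using this
  choose C hC hbd using h0
  refine ⟨∑ j ∈ Finset.range (P.natDegree + 1), C j * (j * R ^ (j - 1)),
    Finset.sum_nonneg fun j _ => mul_nonneg (hC j) (by positivity), ?_⟩
  intro m y y' hy hy'
  rw [evP_sum _ _ _ _ le_rfl, evP_sum _ _ _ _ le_rfl, ← Finset.sum_sub_distrib, Finset.sum_mul]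
  refine (Finset.abs_sum_le_sum_abs _ _).trans (Finset.sum_le_sum fun j _ => ?_)
  rw [← mul_sub, abs_mul]
  have h1 := abs_pow_sub_pow_le y y' j
  have h2 : max |y| |y'| ^ (j - 1) ≤ R ^ (j - 1) := by
    gcongr
    exact max_le hy hy'
  calc |MvPolynomial.aeval (sv q m) (P.coeff j)| * |y ^ j - y' ^ j|
      ≤ C j * (|y - y'| * j * max |y| |y'| ^ (j - 1)) := by
        gcongr
        · exact hC j
        · exact hbd j m
    _ ≤ C j * (|y - y'| * j * R ^ (j - 1)) := by
        have := hC j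
        gcongr
    _ = _ := by ring

lemma evP_poly (s : Fin r → ℝ) (g : MvPolynomial (Fin r) ℚ) (P : Polynomial (MvPolynomial (Fin r) ℚ)) :
    evP s (MvPolynomial.aeval s g) P = MvPolynomial.aeval s (P.eval g) :=
  Polynomial.eval₂_at_apply ((MvPolynomial.aeval s : MvPolynomial (Fin r) ℚ →ₐ[ℚ] ℝ) : MvPolynomial (Fin r) ℚ →+* ℝ) g

lemma siegel (f : MvPowerSeries (Fin r) ℚ) (T M : ℕ) (h : M ^ r < T ^ (r + 1)) :
    ∃ P : Polynomial (MvPolynomial (Fin r) ℚ), P ≠ 0 ∧ P.natDegree ≤ T ∧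
      (∀ j, ∀ γ ∈ (P.coeff j).support, Finsupp.degree γ ≤ r * T) ∧ lowv M (Polynomial.aeval f P) := by
  let mon : (Fin r → Fin T) → (Fin r →₀ ℕ) := fun α => Finsupp.equivFunOnFinite.symm fun i => (α i : ℕ)
  have hmon : Function.Injective mon := by
    intro a b hab
    funext i
    have := congrArg (fun g : Fin r →₀ ℕ => g i) hab
    exact Fin.ext this
  let poly : ((Fin T × (Fin r → Fin T)) → ℚ) → Polynomial (MvPolynomial (Fin r) ℚ) := fun c =>
    ∑ j : Fin T, Polynomial.monomial (j : ℕ) (∑ α, MvPolynomial.monomial (mon α) (c (j, α)))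
  have hpadd : ∀ c c', poly (c + c') = poly c + poly c' := by
    intro c c'
    simp only [poly, Pi.add_apply, map_add, Finset.sum_add_distrib]
  have hpsm : ∀ (a : ℚ) c, poly (a • c) = Polynomial.C (MvPolynomial.C a) * poly c := by
    intro a c
    simp only [poly, Pi.smul_apply, smul_eq_mul, Finset.mul_sum, Polynomial.C_mul_monomial,
      MvPolynomial.C_mul_monomial]
  let φ : ((Fin T × (Fin r → Fin T)) → ℚ) →ₗ[ℚ] ((Fin r → Fin M) → ℚ) :=
    { toFun := fun c β => MvPowerSeries.coeff (Finsupp.equivFunOnFinite.symm fun i => (β i : ℕ))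
        (Polynomial.aeval f (poly c))
      map_add' := by
        intro c c'; funext β
        simp only [hpadd, map_add, Pi.add_apply]
      map_smul' := by
        intro a c; funext β
        simp only [hpsm, map_mul, Polynomial.aeval_C, algMap_mv, MvPolynomial.coe_C,
          MvPowerSeries.coeff_C_mul, RingHom.id_apply, Pi.smul_apply, smul_eq_mul] }
  have hker : LinearMap.ker φ ≠ ⊥ := by
    apply LinearMap.ker_ne_bot_of_finrank_lt
    rw [Module.finrank_fintype_fun_eq_card, Module.finrank_fintype_fun_eq_card]
    simp only [Fintype.card_prod, Fintype.card_fun, Fintype.card_fin]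
    rw [pow_succ] at h
    linarith
  obtain ⟨c, hc, hc0⟩ := (Submodule.ne_bot_iff _).1 hker
  have hcoef : ∀ j : ℕ, (poly c).coeff j = if hj : j < T then
      ∑ α, MvPolynomial.monomial (mon α) (c (⟨j, hj⟩, α)) else 0 := by
    intro j
    simp only [poly, Polynomial.finsetSum_coeff, Polynomial.coeff_monomial]
    split_ifs with hj
    · rw [Finset.sum_eq_single ⟨j, hj⟩]
      · simp
      · intro b _ hb
        rw [if_neg]
        intro h; exact hb (Fin.ext h)
      · simp
    · refine Finset.sum_eq_zero fun b _ => if_neg ?_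
      have := b.2; omega
  refine ⟨poly c, ?_, ?_, ?_, ?_⟩
  · intro hp
    apply hc0
    funext ⟨j, α⟩
    have h1 := hcoef j
    rw [hp, Polynomial.coeff_zero, dif_pos j.2] at h1
    have h2 := congrArg (MvPolynomial.coeff (mon α)) h1
    rw [MvPolynomial.coeff_zero, MvPolynomial.coeff_sum, Finset.sum_eq_single α] at h2
    · rw [MvPolynomial.coeff_monomial, if_pos rfl] at h2
      exact h2.symm
    · intro b _ hb
      rw [MvPolynomial.coeff_monomial, if_neg fun h => hb (hmon h)]
    · simp
  · rw [Polynomial.natDegree_le_iff_coeff_eq_zero]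
    intro j hj
    rw [hcoef, dif_neg (by omega)]
  · intro j γ hγ
    rw [hcoef] at hγ
    split_ifs at hγ with hj
    · rw [MvPolynomial.mem_support_iff, MvPolynomial.coeff_sum] at hγ
      obtain ⟨α, -, hα⟩ := Finset.exists_ne_zero_of_sum_ne_zero hγ
      rw [MvPolynomial.coeff_monomial] at hα
      have : mon α = γ := by by_contra hc; rw [if_neg hc] at hα; exact hα rfl
      rw [← this, Finsupp.degree_eq_sum]
      calc ∑ i, (mon α) i ≤ ∑ i : Fin r, T := Finset.sum_le_sum fun i _ => (α i).2.le
        _ = r * T := by simp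
    · simp at hγ
  · intro γ hγ
    have hlt : ∀ i, γ i < M := fun i => lt_of_le_of_lt (Finsupp.le_degree i γ) hγ
    have := congrFun (LinearMap.mem_ker.1 hc) fun i => ⟨γ i, hlt i⟩
    change MvPowerSeries.coeff (Finsupp.equivFunOnFinite.symm fun i => γ i) (Polynomial.aeval f (poly c)) = 0 at this
    have e : (Finsupp.equivFunOnFinite.symm fun i => γ i) = γ := by ext i; rfl
    rwa [e] at this

end gen3

section gen4
variable {r : ℕ}

lemma pow_beats (q : ℕ) (hq : 2 ≤ q) (𝓤 : Filter ℕ) (H : ℕ → ℕ) (hH : Tendsto H 𝓤 atTop) (C1 C2 : ℝ)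
    (h1 : 0 < C1) : ∀ᶠ n in 𝓤, C2 < C1 * (q : ℝ) ^ H n := by
  have hq1 : (1 : ℝ) < q := by exact_mod_cast (by omega : 1 < q)
  have := (tendsto_pow_atTop_atTop_of_one_lt hq1).comp hH
  filter_upwards [this.eventually_gt_atTop (C2 / C1)] with n hn
  rw [div_lt_iff₀ h1] at hn
  simp only [Function.comp] at hn
  linarith

theorem general (x : ℝ) (hirr : Irrational x) (halg : IsAlgebraic ℚ x) (q : ℕ) (hq : 2 ≤ q)
    (𝓤 : Ultrafilter ℕ) (H : ℕ → ℕ) (hH : Tendsto H (𝓤 : Filter ℕ) atTop) (c : ℕ) (m : ℕ → Fin r → ℕ)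
    (hm1 : ∀ᶠ n in (𝓤 : Filter ℕ), ∀ i, H n ≤ m n i)
    (hm2 : ∀ᶠ n in (𝓤 : Filter ℕ), ∀ i, m n i ≤ c * H n)
    (hres : ∀ γ γ' : Fin r →₀ ℕ, γ ≠ γ' → ∀ C : ℕ, ∀ᶠ n in (𝓤 : Filter ℕ),
      mw (m n) γ + C < mw (m n) γ' ∨ mw (m n) γ' + C < mw (m n) γ)
    (y : ℕ → ℝ) (g h κ : ℕ → ℤ)
    (hy : ∀ᶠ n in (𝓤 : Filter ℕ), g n ≠ 0 ∧ κ n ≠ 0 ∧ κ n * y n = g n * x + h n)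
    (hb : ∀ᶠ n in (𝓤 : Filter ℕ), |(g n : ℝ)| ≤ (q : ℝ) ^ (c * H n) ∧ |(h n : ℝ)| ≤ (q : ℝ) ^ (c * H n) ∧
      |(κ n : ℝ)| ≤ (q : ℝ) ^ (c * H n))
    (e : Bool → (Fin r →₀ ℕ)) (ρ : Bool → ℚ) (w : ℕ → Bool)
    (he : ∀ b, 1 ≤ Finsupp.degree (e b)) (hρ : ∀ b, ρ b ≠ 0)
    (happ : ∀ K : ℕ, ∃ K' ≥ K, ∃ C : ℝ, ∀ᶠ n in (𝓤 : Filter ℕ),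
      |y n - MvPolynomial.aeval (sv q (m n)) (wtr e ρ w K')| ≤ C * ((q : ℝ) ^ (K * H n))⁻¹) : False := by
  have hq1 : (1 : ℝ) ≤ q := by exact_mod_cast (by omega : 1 ≤ q)
  have hq0 : (0 : ℝ) < q := by linarith
  -- closeness
  have hclose : ∀ (P : Polynomial (MvPolynomial (Fin r) ℚ)) (K : ℕ), ∃ K' ≥ K, ∃ C : ℝ, 0 ≤ C ∧
      ∀ᶠ n in (𝓤 : Filter ℕ),
      |evP (sv q (m n)) (y n) P - MvPolynomial.aeval (sv q (m n)) (P.eval (wtr e ρ w K'))| ≤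
        C * ((q : ℝ) ^ (K * H n))⁻¹ := by
    intro P K
    obtain ⟨K', hK', C, hC⟩ := happ K
    obtain ⟨R1, hR1, hg⟩ := poly_upper q hq 0 (wtr e ρ w K') (fun γ h => absurd h (by omega))
    have hR0 : 0 ≤ R1 + |C| := by positivity
    obtain ⟨L, hL, hlip⟩ := evP_lip q hq P (R1 + |C|) hR0
    refine ⟨K', hK', L * |C|, by positivity, ?_⟩
    filter_upwards [hC] with n hn
    have h1 : |MvPolynomial.aeval (sv q (m n)) (wtr e ρ w K')| ≤ R1 := by
      have := hg 0 (m n) (fun _ => Nat.zero_le _)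
      simpa using this
    have hinv : ((q : ℝ) ^ (K * H n))⁻¹ ≤ 1 := inv_le_one_of_one_le₀ (one_le_pow₀ hq1)
    have hinv0 : 0 < ((q : ℝ) ^ (K * H n))⁻¹ := by positivity
    have hn' : |y n - MvPolynomial.aeval (sv q (m n)) (wtr e ρ w K')| ≤ |C| * ((q : ℝ) ^ (K * H n))⁻¹ :=
      hn.trans (mul_le_mul_of_nonneg_right (le_abs_self C) hinv0.le)
    have h2 : |y n| ≤ R1 + |C| := by
      have h3 := abs_sub_abs_le_abs_sub (y n) (MvPolynomial.aeval (sv q (m n)) (wtr e ρ w K'))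
      have h4 : |C| * ((q : ℝ) ^ (K * H n))⁻¹ ≤ |C| := by
        have := abs_nonneg C
        nlinarith
      linarith
    have := hlip (m n) (y n) _ h2 (h1.trans (by have := abs_nonneg C; linarith))
    rw [evP_poly] at this
    refine this.trans ?_
    rw [mul_assoc]
    gcongr
  obtain ⟨c0, hc0, hlow⟩ := low2 x halg q hq c
  -- vanishing
  have hzero : ∀ (P : Polynomial (MvPolynomial (Fin r) ℚ)) (J N M : ℕ), P.natDegree ≤ J →
      (∀ j, ∀ γ ∈ (P.coeff j).support, Finsupp.degree γ ≤ N) →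
      lowv M (Polynomial.aeval (wser e ρ w) P) → c0 * (N + J) < M →
      ∀ᶠ n in (𝓤 : Filter ℕ), evP (sv q (m n)) (y n) P = 0 := by
    intro P J N M hJ hN hM hlt
    obtain ⟨C, hC, hlb⟩ := hlow r J N P hJ hN
    obtain ⟨K', hK', C1, hC1, hcl⟩ := hclose P M
    have hlv : lowv M ((P.eval (wtr e ρ w K') : MvPolynomial (Fin r) ℚ) : MvPowerSeries (Fin r) ℚ) := by
      intro γ hγ
      have h1 := eval_low e ρ w he K' P γ (by omega)
      rw [map_sub, hM γ hγ, zero_sub, neg_eq_zero] at h1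
      exact h1
    obtain ⟨C2, hC2, hup⟩ := poly_upper q hq M _ hlv
    filter_upwards [hcl, hm1, hm2, hy, hb, pow_beats q hq _ H hH C (C1 + C2) hC] with n h1 h2 h3 h4 h5 h6
    by_contra hne
    have hl := hlb (H n) (m n) (g n) (h n) (κ n) (y n) h3 h5.1 h5.2.1 h5.2.2 h4.2.1 h4.2.2 hne
    have hu := hup (H n) (m n) h2
    have hu2 : |evP (sv q (m n)) (y n) P| ≤ (C1 + C2) * ((q : ℝ) ^ (M * H n))⁻¹ := by
      have := abs_sub_abs_le_abs_sub (evP (sv q (m n)) (y n) P) (MvPolynomial.aeval (sv q (m n)) (P.eval (wtr e ρ w K')))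
      linarith
    have hexp : (q : ℝ) ^ (c0 * (N + J) * H n) * (q : ℝ) ^ H n ≤ (q : ℝ) ^ (M * H n) := by
      rw [← pow_add]
      apply pow_le_pow_right₀ hq1
      have : (c0 * (N + J) + 1) * H n ≤ M * H n := Nat.mul_le_mul_right _ hlt
      linarith
    have hQ : 0 < (q : ℝ) ^ (M * H n) := by positivity
    have hQ2 : 0 < (q : ℝ) ^ (H n) := by positivity
    rw [← div_eq_mul_inv, le_div_iff₀ hQ] at hu2
    have : C * (q : ℝ) ^ H n ≤ C1 + C2 := by
      calc C * (q : ℝ) ^ H n ≤ |evP (sv q (m n)) (y n) P| * (q : ℝ) ^ (c0 * (N + J) * H n) * (q : ℝ) ^ H n := by gcongr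
        _ = |evP (sv q (m n)) (y n) P| * ((q : ℝ) ^ (c0 * (N + J) * H n) * (q : ℝ) ^ H n) := by ring
        _ ≤ |evP (sv q (m n)) (y n) P| * (q : ℝ) ^ (M * H n) := by gcongr
        _ ≤ _ := hu2
    linarith
  -- nonvanishing
  have hnz : ∀ (P : Polynomial (MvPolynomial (Fin r) ℚ)), Polynomial.aeval (wser e ρ w) P ≠ 0 →
      ∀ᶠ n in (𝓤 : Filter ℕ), evP (sv q (m n)) (y n) P ≠ 0 := by
    intro P hP
    obtain ⟨γ, hγ⟩ : ∃ γ, MvPowerSeries.coeff γ (Polynomial.aeval (wser e ρ w) P) ≠ 0 := by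
      by_contra! hc
      exact hP (MvPowerSeries.ext hc)
    obtain ⟨K', hK', C1, hC1, hcl⟩ := hclose P (Finsupp.degree γ * c + Finsupp.degree γ + 1)
    have hγs : γ ∈ (P.eval (wtr e ρ w K')).support := by
      rw [MvPolynomial.mem_support_iff]
      intro h0
      apply hγ
      have h1 := eval_low e ρ w he K' P γ (by nlinarith [Nat.zero_le (Finsupp.degree γ * c)])
      rw [map_sub, MvPolynomial.coeff_coe, h0, sub_zero] at h1
      exact h1
    obtain ⟨c', hc', hnv⟩ := nv q hq 𝓤 m hres _ γ hγs
    filter_upwards [hcl, hnv, hm2, pow_beats q hq _ H hH c' C1 hc'] with n h1 h2 h3 h4 h0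
    rw [h0, zero_sub, abs_neg] at h1
    have h5 : mw (m n) γ ≤ Finsupp.degree γ * (c * H n) := mw_le _ _ h3 γ
    have h6 := h2.trans h1
    have hA : 0 < (q : ℝ) ^ mw (m n) γ := by positivity
    have hB : 0 < (q : ℝ) ^ ((Finsupp.degree γ * c + Finsupp.degree γ + 1) * H n) := by positivity
    rw [← div_eq_mul_inv, ← div_eq_mul_inv, div_le_div_iff₀ hA hB] at h6
    have h7 : (q : ℝ) ^ mw (m n) γ * (q : ℝ) ^ H n ≤ (q : ℝ) ^ ((Finsupp.degree γ * c + Finsupp.degree γ + 1) * H n) := by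
      rw [← pow_add]
      apply pow_le_pow_right₀ hq1
      have : (Finsupp.degree γ * c + Finsupp.degree γ + 1) * H n = Finsupp.degree γ * (c * H n) + Finsupp.degree γ * H n + H n := by ring
      rw [this]
      omega
    have h8 : c' * ((q : ℝ) ^ mw (m n) γ * (q : ℝ) ^ H n) ≤ C1 * (q : ℝ) ^ mw (m n) γ :=
      (mul_le_mul_of_nonneg_left h7 hc'.le).trans h6
    have h9 : c' * (q : ℝ) ^ H n ≤ C1 := by
      refine le_of_mul_le_mul_right ?_ hA
      linarith
    linarith
  by_cases hal : IsAlgebraic (MvPolynomial (Fin r) ℚ) (wser e ρ w)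
  · obtain ⟨D, N, hD, hDN⟩ := alg_rational e ρ he hρ w hal
    let P : Polynomial (MvPolynomial (Fin r) ℚ) := Polynomial.C D * Polynomial.X - Polynomial.C N
    have hP0 : Polynomial.aeval (wser e ρ w) P = 0 := by
      simp only [P, map_sub, map_mul, Polynomial.aeval_C, Polynomial.aeval_X, algMap_mv, hDN, sub_self]
    obtain ⟨N', hN'⟩ : ∃ N', ∀ j, ∀ γ ∈ (P.coeff j).support, Finsupp.degree γ ≤ N' := by
      refine ⟨(Finset.range (P.natDegree + 1)).sup fun j => (P.coeff j).support.sup fun β => Finsupp.degree β,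
        fun j γ hγ => ?_⟩
      have hj : j ∈ Finset.range (P.natDegree + 1) := by
        rw [Finset.mem_range]
        by_contra hc
        rw [Polynomial.coeff_eq_zero_of_natDegree_lt (by omega)] at hγ
        simp at hγ
      exact (Finset.le_sup (f := fun β => Finsupp.degree β) hγ).trans
        (Finset.le_sup (f := fun j => (P.coeff j).support.sup fun β => Finsupp.degree β) hj)
    have h1 := hzero P P.natDegree N' (c0 * (N' + P.natDegree) + 1) le_rfl hN'
      (by rw [hP0]; intro γ _; simp) (by omega)
    obtain ⟨γ, hγ⟩ := MvPolynomial.support_nonempty.2 hD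
    obtain ⟨c', hc', hnv⟩ := nv q hq 𝓤 m hres D γ hγ
    obtain ⟨n, h2, h3, h4⟩ := (h1.and (hnv.and hy)).exists
    have hDs : MvPolynomial.aeval (sv q (m n)) D ≠ 0 := by
      intro h0
      rw [h0, abs_zero] at h3
      have : 0 < c' * ((q : ℝ) ^ mw (m n) γ)⁻¹ := by positivity
      linarith
    have h5 : MvPolynomial.aeval (sv q (m n)) D * y n = MvPolynomial.aeval (sv q (m n)) N := by
      have : evP (sv q (m n)) (y n) P = MvPolynomial.aeval (sv q (m n)) D * y n - MvPolynomial.aeval (sv q (m n)) N := by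
        simp [evP, P]
      rw [this] at h2
      linarith
    have hrat : ∀ G : MvPolynomial (Fin r) ℚ, ∃ t : ℚ, MvPolynomial.aeval (sv q (m n)) G = (t : ℝ) := by
      intro G
      refine ⟨∑ γ ∈ G.support, MvPolynomial.coeff γ G * ((q : ℚ) ^ mw (m n) γ)⁻¹, ?_⟩
      rw [aeval_sv]; push_cast; rfl
    obtain ⟨t1, ht1⟩ := hrat D
    obtain ⟨t2, ht2⟩ := hrat N
    rw [ht1] at h5 hDs
    rw [ht2] at h5
    obtain ⟨hg0, hκ0, heq⟩ := h4
    apply hirr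
    refine ⟨(κ n * (t2 / t1) - h n) / g n, ?_⟩
    have hg0' : (g n : ℝ) ≠ 0 := by exact_mod_cast hg0
    push_cast
    have hyn : y n = t2 / t1 := by field_simp; linarith
    rw [← hyn, heq]
    field_simp
    ring
  · -- transcendental case
    set b := c0 * (r + 1) with hbdef
    have hb1 : 1 ≤ b := Nat.mul_pos hc0 (Nat.succ_pos _)
    set T := 2 ^ r * b ^ r + 1 with hT
    have hT1 : 1 ≤ T := by omega
    have hcount : (2 * b * T) ^ r < T ^ (r + 1) := by
      rw [mul_pow, mul_pow, pow_succ, mul_comm]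
      apply Nat.mul_lt_mul_of_pos_left _ (by positivity)
      omega
    obtain ⟨P, hP, hdeg, hsup, hlv⟩ := siegel (wser e ρ w) T (2 * b * T) hcount
    have hne : Polynomial.aeval (wser e ρ w) P ≠ 0 := fun h0 => hal ⟨P, hP, h0⟩
    have h1 := hzero P T (r * T) (2 * b * T) hdeg hsup hlv (by
      have : c0 * (r * T + T) = b * T := by rw [hbdef]; ring
      rw [this]
      nlinarith)
    obtain ⟨n, h2, h3⟩ := (h1.and (hnz P hne)).exists
    exact h3 h2

end gen4

/-- agreement of length `n` -/
def agr (u : ℕ → ℕ) (n i j : ℕ) : Prop := ∀ t < n, u (i + t) = u (j + t)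

def wrd (u : ℕ → ℕ) (n i : ℕ) : Fin n → ℕ := fun t => u (i + t)

noncomputable def cx (u : ℕ → ℕ) (n : ℕ) : ℕ := (Set.range (wrd u n)).ncard

lemma wrd_eq (u : ℕ → ℕ) (n i j : ℕ) : wrd u n i = wrd u n j ↔ agr u n i j := by
  constructor
  · intro h t ht
    exact congrFun h ⟨t, ht⟩
  · intro h
    funext t
    exact h t t.2

lemma agr_symm {u : ℕ → ℕ} {n i j : ℕ} (h : agr u n i j) : agr u n j i := fun t ht => (h t ht).symm
lemma agr_trans {u : ℕ → ℕ} {n i j k : ℕ} (h : agr u n i j) (h' : agr u n j k) : agr u n i k :=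
  fun t ht => (h t ht).trans (h' t ht)
lemma agr_mono {u : ℕ → ℕ} {n m i j : ℕ} (h : agr u n i j) (hm : m ≤ n) : agr u m i j :=
  fun t ht => h t (by omega)
lemma agr_succ {u : ℕ → ℕ} {n i j : ℕ} (h : agr u n i j) (h' : u (i + n) = u (j + n)) :
    agr u (n + 1) i j := by
  intro t ht
  rcases Nat.lt_succ_iff_lt_or_eq.1 ht with h1 | h1
  · exact h t h1
  · rw [h1]; exact h'
lemma agr_shift {u : ℕ → ℕ} {n i j : ℕ} (s : ℕ) (h : agr u (n + s) i j) : agr u n (i + s) (j + s) := by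
  intro t ht
  have := h (s + t) (by omega)
  rwa [← add_assoc, ← add_assoc] at this
lemma agr_cons {u : ℕ → ℕ} {n i j : ℕ} (h0 : u i = u j) (h : agr u n (i + 1) (j + 1)) :
    agr u (n + 1) i j := by
  intro t ht
  rcases t with _ | t
  · exact h0
  · have := h t (by omega)
    rwa [show i + (t + 1) = i + 1 + t by ring, show j + (t + 1) = j + 1 + t by ring]


lemma wfin (u : ℕ → ℕ) (q : ℕ) (hu : ∀ i, u i < q) (n : ℕ) : (Set.range (wrd u n)).Finite := by
  have : (Set.pi Set.univ fun _ : Fin n => Set.Iio q).Finite := Set.Finite.pi fun _ => Set.finite_Iio q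
  refine this.subset ?_
  rintro _ ⟨i, rfl⟩ t _
  exact hu _

lemma pigeon (u : ℕ → ℕ) (q : ℕ) (hu : ∀ i, u i < q) (n k : ℕ) : ∃ i j, k ≤ i ∧ i < j ∧ j ≤ k + cx u n ∧ agr u n i j := by
  have hf := wfin u q hu n
  have hcard : hf.toFinset.card < (Finset.Icc k (k + cx u n)).card := by
    rw [← Set.ncard_eq_toFinset_card _ hf, Nat.card_Icc]
    change cx u n < _
    omega
  obtain ⟨i, hi, j, hj, hij, h⟩ := Finset.exists_ne_map_eq_of_card_lt_of_maps_to hcard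
    (f := wrd u n) (fun i _ => by simp)
  rw [Finset.mem_Icc] at hi hj
  rw [wrd_eq] at h
  rcases lt_or_gt_of_ne hij with h1 | h1
  · exact ⟨i, j, hi.1, h1, hj.2, h⟩
  · exact ⟨j, i, hj.1, h1, hi.2, agr_symm h⟩

/-- The restriction map. -/
lemma restr_image (u : ℕ → ℕ) (n : ℕ) :
    Set.image (fun (v : Fin (n + 1) → ℕ) (t : Fin n) => v t.castSucc) (Set.range (wrd u (n + 1))) = Set.range (wrd u n) := by
  rw [← Set.range_comp]
  rfl

lemma cx_succ (u : ℕ → ℕ) (q : ℕ) (hu : ∀ i, u i < q) (hap : ∀ i j, i < j → ∃ t, u (i + t) ≠ u (j + t)) (n : ℕ) : cx u n + 1 ≤ cx u (n + 1) := by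
  by_contra hc
  have hinj : Set.InjOn (fun (v : Fin (n + 1) → ℕ) (t : Fin n) => v t.castSucc) (Set.range (wrd u (n + 1))) := by
    apply Set.injOn_of_ncard_image_eq _ (wfin u q hu (n + 1))
    refine le_antisymm (Set.ncard_image_le (wfin u q hu (n + 1))) ?_
    rw [restr_image u]
    change cx u (n + 1) ≤ cx u n
    omega
  have hdet : ∀ i j, agr u n i j → agr u (n + 1) i j := by
    intro i j h
    rw [← wrd_eq] at h ⊢
    exact hinj ⟨i, rfl⟩ ⟨j, rfl⟩ h
  obtain ⟨i, j, -, hij, -, h⟩ := pigeon u q hu n 0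
  obtain ⟨t, ht⟩ := hap i j hij
  have hall : ∀ s, agr u n (i + s) (j + s) := by
    intro s
    induction s with
    | zero => exact h
    | succ s ih => exact agr_shift 1 (hdet _ _ ih)
  exact ht (hdet _ _ (hall t) 0 (by omega))

lemma two_coll (u : ℕ → ℕ) (q : ℕ) (hu : ∀ i, u i < q) (n : ℕ) (hn : cx u (n + 1) ≤ cx u n + 1) (i j k l : ℕ) (h1 : agr u n i j)
    (h2 : u (i + n) ≠ u (j + n)) (h3 : agr u n k l) (h4 : u (k + n) ≠ u (l + n)) :
    agr u (n + 1) k i ∨ agr u (n + 1) k j := by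
  by_contra! hc
  set A := Set.range (wrd u (n + 1)) with hA
  set f := (fun (v : Fin (n + 1) → ℕ) (t : Fin n) => v t.castSucc) with hf
  have hfin : A.Finite := wfin u q hu (n + 1)
  have hki : wrd u (n + 1) k ≠ wrd u (n + 1) i := fun h => hc.1 ((wrd_eq _ _ _ _).1 h)
  have hkj : wrd u (n + 1) k ≠ wrd u (n + 1) j := fun h => hc.2 ((wrd_eq _ _ _ _).1 h)
  have hij : wrd u (n + 1) i ≠ wrd u (n + 1) j := fun h => h2 ((wrd_eq _ _ _ _).1 h n (by omega))
  have hkl : wrd u (n + 1) k ≠ wrd u (n + 1) l := fun h => h4 ((wrd_eq _ _ _ _).1 h n (by omega))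
  have fij : f (wrd u (n + 1) i) = f (wrd u (n + 1) j) := (wrd_eq _ _ _ _).2 h1
  have fkl : f (wrd u (n + 1) k) = f (wrd u (n + 1) l) := (wrd_eq _ _ _ _).2 h3
  set a := wrd u (n + 1) i
  set a' := wrd u (n + 1) j
  set b := wrd u (n + 1) k
  set b' := wrd u (n + 1) l
  have hsub : Set.image f A ⊆ Set.image f ((A \ {a}) \ {b}) := by
    rintro _ ⟨z, hz, rfl⟩
    by_cases hza : z = a
    · exact ⟨a', ⟨⟨⟨j, rfl⟩, fun h => hij h.symm⟩, fun h => hkj h.symm⟩, by rw [hza, fij]⟩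
    · by_cases hzb : z = b
      · by_cases hb' : b' = a
        · exact ⟨a', ⟨⟨⟨j, rfl⟩, fun h => hij h.symm⟩, fun h => hkj h.symm⟩, by rw [hzb, fkl, hb', fij]⟩
        · exact ⟨b', ⟨⟨⟨l, rfl⟩, hb'⟩, fun h => hkl h.symm⟩, by rw [hzb, fkl]⟩
      · exact ⟨z, ⟨⟨hz, hza⟩, hzb⟩, rfl⟩
  have e1 := Set.ncard_le_ncard hsub ((hfin.sdiff.sdiff).image f)
  have e2 := Set.ncard_image_le (f := f) (hfin.sdiff.sdiff (t := {b}) (s := A \ {a}))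
  have e3 := Set.ncard_sdiff_singleton_add_one (s := A) (a := a) ⟨i, rfl⟩ hfin
  have e4 := Set.ncard_sdiff_singleton_add_one (s := A \ {a}) (a := b) ⟨⟨k, rfl⟩, hki⟩ hfin.sdiff
  have e5 : (Set.image f A).ncard = cx u n := by rw [hf, hA, restr_image u]; rfl
  have e6 : A.ncard = cx u (n + 1) := rfl
  omega

lemma cx_shift (u : ℕ → ℕ) (q : ℕ) (hu : ∀ i, u i < q) (k n : ℕ) :
    cx (fun i => u (k + i)) n ≤ cx u n := by
  apply Set.ncard_le_ncard _ (wfin u q hu n)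
  rintro _ ⟨i, rfl⟩
  exact ⟨k + i, by funext t; simp [wrd, add_assoc]⟩

/-- reduction to a recurrent sequence with `cx n = n + C` eventually -/
lemma reduce (u : ℕ → ℕ) (q : ℕ) (hu : ∀ i, u i < q)
    (hap : ∀ i j, i < j → ∃ t, u (i + t) ≠ u (j + t)) (C0 : ℕ) (hC : ∃ᶠ n in atTop, cx u n ≤ n + C0) :
    ∃ k0 C n0 : ℕ, (∀ n ≥ n0, cx (fun i => u (k0 + i)) n = n + C) ∧
      ∀ n i k, ∃ j ≥ k, agr (fun i => u (k0 + i)) n i j := by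
  have hap' : ∀ k i j, i < j → ∃ t, (fun i => u (k + i)) (i + t) ≠ (fun i => u (k + i)) (j + t) := by
    intro k i j hij
    obtain ⟨t, ht⟩ := hap (k + i) (k + j) (by omega)
    exact ⟨t, by simpa [add_assoc] using ht⟩
  have hmono : ∀ k n m, n ≤ m → cx (fun i => u (k + i)) n + (m - n) ≤ cx (fun i => u (k + i)) m := by
    intro k n m hnm
    induction m, hnm using Nat.le_induction with
    | base => simp
    | succ m hm ih =>
      have := cx_succ (fun i => u (k + i)) q (fun i => hu _) (hap' k) m
      omega
  have hex : ∃ C k, ∀ n, cx (fun i => u (k + i)) n ≤ n + C := by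
    refine ⟨C0, 0, fun n => ?_⟩
    obtain ⟨m, hm, h⟩ := (Filter.frequently_atTop.1 hC) n
    have := hmono 0 n m hm
    simp only [zero_add] at this ⊢
    change cx u n + _ ≤ cx u m at this
    change cx u n ≤ _
    omega
  set C := Nat.find hex with hCdef
  obtain ⟨k0, hk0⟩ := Nat.find_spec hex
  have hmin : ∀ k, ∃ n0, ∀ n ≥ n0, n + C ≤ cx (fun i => u (k + i)) n := by
    intro k
    rcases Nat.eq_zero_or_pos C with h0 | h0
    · refine ⟨0, fun n _ => ?_⟩
      have := hmono k 0 n (Nat.zero_le _)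
      omega
    · have := Nat.find_min hex (m := C - 1) (by omega)
      push Not at this
      obtain ⟨n0, hn0⟩ := this k
      refine ⟨n0, fun n hn => ?_⟩
      have := hmono k n0 n hn
      omega
  obtain ⟨n0, hn0⟩ := hmin k0
  refine ⟨k0, C, n0, fun n hn => le_antisymm (hk0 n) (hn0 n hn), ?_⟩
  intro n i k
  obtain ⟨n1, hn1⟩ := hmin (k0 + k)
  set N := max n n1
  have hsub : Set.range (wrd (fun i => u (k0 + k + i)) N) ⊆ Set.range (wrd (fun i => u (k0 + i)) N) := by
    rintro _ ⟨i, rfl⟩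
    exact ⟨k + i, by funext t; simp [wrd, add_assoc]⟩
  have heq := Set.eq_of_subset_of_ncard_le hsub
    ((hk0 N).trans (hn1 N (le_max_right _ _))) (wfin _ q (fun i => hu _) N)
  have hmem : wrd (fun i => u (k0 + i)) N i ∈ Set.range (wrd (fun i => u (k0 + k + i)) N) := by
    rw [heq]; exact ⟨i, rfl⟩
  obtain ⟨j, hj⟩ := hmem
  refine ⟨k + j, by omega, ?_⟩
  have h2 : wrd (fun i => u (k0 + i)) N (k + j) = wrd (fun i => u (k0 + i)) N i := by
    rw [← hj]; funext t; simp [wrd, add_assoc]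
  exact agr_mono (agr_symm ((wrd_eq _ _ _ _).1 h2)) (le_max_left _ _)

/-- `i` is the position of a right special word of length `n` -/
def Sp (v : ℕ → ℕ) (n i : ℕ) : Prop := ∃ j, agr v n i j ∧ v (i + n) ≠ v (j + n)

lemma sp_agr {v : ℕ → ℕ} {n i k : ℕ} (h : Sp v n i) (hk : agr v n i k) : Sp v n k := by
  obtain ⟨j, hj, hne⟩ := h
  by_cases hc : v (k + n) = v (i + n)
  · exact ⟨j, agr_trans (agr_symm hk) hj, by rw [hc]; exact hne⟩
  · exact ⟨i, agr_symm hk, hc⟩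

lemma sp_det {v : ℕ → ℕ} {n i j : ℕ} (h : ¬ Sp v n i) (hk : agr v n i j) : agr v (n + 1) i j := by
  apply agr_succ hk
  by_contra hc
  exact h ⟨j, hk, hc⟩

lemma sp_shift {v : ℕ → ℕ} {n i : ℕ} (s : ℕ) (h : Sp v (n + s) i) : Sp v n (i + s) := by
  obtain ⟨j, hj, hne⟩ := h
  refine ⟨j + s, agr_shift s hj, ?_⟩
  rwa [show i + s + n = i + (n + s) by ring, show j + s + n = j + (n + s) by ring]

lemma sp_ex (v : ℕ → ℕ) (q : ℕ) (hv : ∀ i, v i < q)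
    (hap : ∀ i j, i < j → ∃ t, v (i + t) ≠ v (j + t)) (n k : ℕ) :
    ∃ i, k ≤ i ∧ i < k + cx v n ∧ Sp v n i := by
  by_contra! hc
  obtain ⟨i, j, hki, hij, hj, h⟩ := pigeon v q hv n k
  have h1 : ∀ s, ∃ i', i ≤ i' ∧ i' < j ∧ agr v n (i + s) i' := by
    intro s
    induction s with
    | zero => exact ⟨i, le_rfl, hij, fun _ _ => rfl⟩
    | succ s ih =>
      obtain ⟨i', h1, h2, h3⟩ := ih
      have h4 := agr_symm (agr_shift 1 (sp_det (hc i' (by omega) (by omega)) (agr_symm h3)))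
      by_cases h5 : i' + 1 = j
      · exact ⟨i, le_rfl, hij, agr_trans h4 (by rw [h5]; exact agr_symm h)⟩
      · exact ⟨i' + 1, by omega, by omega, h4⟩
  have h2 : ∀ s, ¬ Sp v n (i + s) := by
    intro s hs
    obtain ⟨i', a, b, c⟩ := h1 s
    exact hc i' (by omega) (by omega) (sp_agr hs c)
  have h3 : ∀ s, agr v n (i + s) (j + s) := by
    intro s
    induction s with
    | zero => exact h
    | succ s ih => exact agr_shift 1 (sp_det (h2 s) ih)
  obtain ⟨t, ht⟩ := hap i j hij
  exact ht (sp_det (h2 t) (h3 t) 0 (by omega))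

/-- The structure of the return to special words. -/
structure Str (v : ℕ → ℕ) (n C : ℕ) (lt : Bool → ℕ) (G : Bool → ℕ) : Prop where
  t1 : ∀ i, Sp v n i → ∃ b, v (i + n) = lt b
  t2 : ∀ b, ∃ i, Sp v n i ∧ v (i + n) = lt b
  t3 : ∀ b, 1 ≤ G b ∧ G b ≤ n + C
  t4 : ∀ b i, Sp v n i → v (i + n) = lt b → Sp v n (i + G b) ∧ ∀ s, 0 < s → s < G b → ¬ Sp v n (i + s)
  t5 : ∀ b i j, Sp v n i → v (i + n) = lt b → Sp v n j → v (j + n) = lt b → agr v (n + G b) i j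
  t6 : ∀ i j, Sp v n i → Sp v n j → agr v n i j

lemma str_ex (v : ℕ → ℕ) (q : ℕ) (hv : ∀ i, v i < q)
    (hap : ∀ i j, i < j → ∃ t, v (i + t) ≠ v (j + t)) (C n0 : ℕ) (hcx : ∀ n ≥ n0, cx v n = n + C) :
    ∃ lt : Bool → ℕ, lt true ≠ lt false ∧ ∀ n ≥ n0, ∃ G, Str v n C lt G := by
  obtain ⟨i0, -, -, j0, h0, h0'⟩ := sp_ex v q hv hap n0 0
  refine ⟨fun b => if b then v (i0 + n0) else v (j0 + n0), by simpa using h0', ?_⟩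
  intro n hn
  set lt : Bool → ℕ := fun b => if b then v (i0 + n0) else v (j0 + n0) with hlt
  have hcn : ∀ n ≥ n0, cx v (n + 1) ≤ cx v n + 1 := fun n hn => by
    rw [hcx n hn, hcx (n + 1) (by omega)]; omega
  have t1 : ∀ i, Sp v n i → ∃ b, v (i + n) = lt b := by
    intro i hi
    have h1 : Sp v n0 (i + (n - n0)) := sp_shift (n - n0) (by rwa [show n0 + (n - n0) = n by omega])
    obtain ⟨j, hj, hj'⟩ := h1
    rcases two_coll v q hv n0 (hcn n0 le_rfl) i0 j0 _ j h0 h0' hj hj' with h | h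
    · refine ⟨true, ?_⟩
      have := h n0 (by omega)
      rw [show i + (n - n0) + n0 = i + n by omega] at this
      simpa [hlt] using this
    · refine ⟨false, ?_⟩
      have := h n0 (by omega)
      rw [show i + (n - n0) + n0 = i + n by omega] at this
      simpa [hlt] using this
  have t2 : ∀ b, ∃ i, Sp v n i ∧ v (i + n) = lt b := by
    intro b
    obtain ⟨i, -, -, hi⟩ := sp_ex v q hv hap n 0
    obtain ⟨j, hj, hj'⟩ := id hi
    have hsj := sp_agr hi hj
    obtain ⟨b1, hb1⟩ := t1 i hi
    obtain ⟨b2, hb2⟩ := t1 j hsj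
    by_cases h : b1 = b
    · exact ⟨i, hi, h ▸ hb1⟩
    · refine ⟨j, hsj, ?_⟩
      have h12 : b1 ≠ b2 := by
        rintro rfl
        exact hj' (hb1.trans hb2.symm)
      have : b2 = b := by
        cases b <;> cases b1 <;> cases b2 <;> simp_all
      exact this ▸ hb2
  have t6 : ∀ i j, Sp v n i → Sp v n j → agr v n i j := by
    rintro i j ⟨i', hi, hi'⟩ ⟨j', hj, hj'⟩
    rcases two_coll v q hv n (hcn n hn) i i' j j' hi hi' hj hj' with h | h
    · exact agr_symm (agr_mono h (by omega))
    · exact agr_symm (agr_trans (agr_mono h (by omega)) (agr_symm hi))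
  have key : ∀ b, ∃ g, (1 ≤ g ∧ g ≤ n + C) ∧ (∀ i, Sp v n i → v (i + n) = lt b →
      Sp v n (i + g) ∧ ∀ s, 0 < s → s < g → ¬ Sp v n (i + s)) ∧
      ∀ i j, Sp v n i → v (i + n) = lt b → Sp v n j → v (j + n) = lt b → agr v (n + g) i j := by
    intro b
    obtain ⟨i, hi, hib⟩ := t2 b
    have hex : ∃ s, Sp v n (i + 1 + s) := by
      obtain ⟨k, hk, -, hk'⟩ := sp_ex v q hv hap n (i + 1)
      exact ⟨k - (i + 1), by rwa [show i + 1 + (k - (i + 1)) = k by omega]⟩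
    set s0 := Nat.find hex with hs0
    have hsp : Sp v n (i + 1 + s0) := Nat.find_spec hex
    have hns : ∀ s < s0, ¬ Sp v n (i + 1 + s) := fun s hs => Nat.find_min hex hs
    have hag : ∀ j, Sp v n j → v (j + n) = lt b → ∀ s ≤ s0, agr v (n + s + 1) i j := by
      intro j hj hjb s
      induction s with
      | zero => intro _; exact agr_succ (t6 i j hi hj) (hib.trans hjb.symm)
      | succ s ih =>
        intro hs
        have h1 := ih (by omega)
        have h2 : agr v n (i + (1 + s)) (j + (1 + s)) := agr_shift (1 + s) (agr_mono h1 (by omega))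
        have h3 := sp_det (by rw [← add_assoc]; exact hns s (by omega)) h2 n (by omega)
        apply agr_succ h1
        rwa [show i + (n + s + 1) = i + (1 + s) + n by ring, show j + (n + s + 1) = j + (1 + s) + n by ring]
    refine ⟨s0 + 1, ⟨by omega, ?_⟩, ?_, ?_⟩
    · obtain ⟨k, hk, hk2, hk'⟩ := sp_ex v q hv hap n (i + 1)
      rw [hcx n hn] at hk2
      by_contra hcc
      exact hns (k - (i + 1)) (by omega) (by rwa [show i + 1 + (k - (i + 1)) = k by omega])
    · intro j hj hjb
      constructor
      · have h1 := agr_shift (s0 + 1) (agr_mono (hag j hj hjb s0 le_rfl) (m := n + (s0 + 1)) (by omega))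
        exact sp_agr (by rwa [show i + (s0 + 1) = i + 1 + s0 by ring]) h1
      · intro s hs1 hs2 hsj
        have h1 : agr v n (i + s) (j + s) := agr_shift s (agr_mono (hag j hj hjb s0 le_rfl) (by omega))
        have h2 := sp_agr hsj (agr_symm h1)
        exact hns (s - 1) (by omega) (by rwa [show i + 1 + (s - 1) = i + s by omega])
    · intro j k hj hjb hk hkb
      exact agr_trans (agr_symm (hag j hj hjb s0 le_rfl)) (hag k hk hkb s0 le_rfl)
  choose G hG using key
  exact ⟨G, t1, t2, fun b => (hG b).1, fun b => (hG b).2.1, fun b => (hG b).2.2, t6⟩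

lemma str_prev {v : ℕ → ℕ} {n C : ℕ} {lt : Bool → ℕ} {G : Bool → ℕ} (h : Str v n C lt G) (s0 : ℕ) (hs : Sp v n s0)
    (p : ℕ) : ∃ i b s, s0 ≤ i ∧ Sp v n i ∧ v (i + n) = lt b ∧ s0 + p = i + s ∧ s < G b := by
  induction p with
  | zero =>
    obtain ⟨b, hb⟩ := h.t1 s0 hs
    exact ⟨s0, b, 0, le_rfl, hs, hb, rfl, (h.t3 b).1⟩
  | succ p ih =>
    obtain ⟨i, b, s, h1, h2, h3, h4, h5⟩ := ih
    by_cases hc : s + 1 < G b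
    · exact ⟨i, b, s + 1, h1, h2, h3, by omega, hc⟩
    · have h6 := (h.t4 b i h2 h3).1
      obtain ⟨b', hb'⟩ := h.t1 _ h6
      exact ⟨i + G b, b', 0, by omega, h6, hb', by omega, (h.t3 b').1⟩

lemma str_pred {v : ℕ → ℕ} {n C : ℕ} {lt : Bool → ℕ} {G : Bool → ℕ} (h : Str v n C lt G) (s0 p : ℕ) (hs : Sp v n s0)
    (hp : Sp v n p) (hsp : s0 < p) : ∃ i b, s0 ≤ i ∧ Sp v n i ∧ v (i + n) = lt b ∧ i + G b = p := by
  obtain ⟨i, b, s, h1, h2, h3, h4, h5⟩ := str_prev h s0 hs (p - 1 - s0)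
  refine ⟨i, b, h1, h2, h3, ?_⟩
  by_contra hc
  exact (h.t4 b i h2 h3).2 (s + 1) (by omega) (by omega) (by rwa [show i + (s + 1) = p by omega])

lemma str_mono {v : ℕ → ℕ} {n C : ℕ} {lt : Bool → ℕ} {G G' : Bool → ℕ} (h : Str v n C lt G)
    (h' : Str v (n + 1) C lt G') (b : Bool) : G b ≤ G' b := by
  obtain ⟨i, hi, hib⟩ := h'.t2 b
  by_contra hc
  have h1 := sp_shift 1 hi
  have h2 := sp_shift 1 (h'.t4 b i hi hib).1
  have h3 := (h'.t3 b).1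
  refine (h.t4 b _ h1 ?_).2 (G' b) (by omega) (by omega) ?_
  · rwa [show i + 1 + n = i + (n + 1) by ring]
  · rwa [show i + 1 + G' b = i + G' b + 1 by ring]

lemma str_sum {v : ℕ → ℕ} {n C : ℕ} {lt : Bool → ℕ} {G : Bool → ℕ} (h : Str v n C lt G) (hcx : cx v n = n + C)
    (hrec : ∀ n i k, ∃ j ≥ k, agr v n i j) (b : Bool) : n + C ≤ G b + G (!b) := by
  choose rep hrep hrepb using h.t2
  set F : Bool → Finset (Fin n → ℕ) := fun b => (Finset.range (G b)).image (fun s => wrd v n (rep b + s)) with hF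
  have hsub : Set.range (wrd v n) ⊆ (↑(F b ∪ F (!b)) : Set (Fin n → ℕ)) := by
    rintro _ ⟨p, rfl⟩
    obtain ⟨p', hp', hpp⟩ := hrec n p (rep true)
    obtain ⟨i, b1, s, h1, h2, h3, h4, h5⟩ := str_prev h (rep true) (hrep true) (p' - rep true)
    have h6 : wrd v n p = wrd v n (rep b1 + s) := by
      rw [wrd_eq]
      apply agr_trans hpp
      rw [show p' = i + s by omega]
      exact agr_shift s (agr_mono (h.t5 b1 i (rep b1) h2 h3 (hrep b1) (hrepb b1)) (by omega))
    have h7 : wrd v n p ∈ F b1 := by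
      rw [hF, Finset.mem_image]
      exact ⟨s, Finset.mem_range.2 h5, h6.symm⟩
    rw [Finset.mem_coe, Finset.mem_union]
    by_cases hb : b1 = b
    · left; exact hb ▸ h7
    · right
      have : b1 = !b := by cases b <;> cases b1 <;> simp_all
      exact this ▸ h7
  have e1 := Set.ncard_le_ncard hsub (Finset.finite_toSet _)
  rw [Set.ncard_coe_finset] at e1
  have e2 := Finset.card_union_le (F b) (F (!b))
  have e3 : ∀ b, (F b).card ≤ G b := fun b => (Finset.card_image_le).trans (by simp)
  have := e3 b
  have := e3 (!b)
  change cx v n ≤ _ at e1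
  omega

lemma str_const {v : ℕ → ℕ} {n C : ℕ} {lt : Bool → ℕ} {G G' : Bool → ℕ} (h : Str v n C lt G)
    (h' : Str v (n + 1) C lt G') (b : Bool) (hG' : G' b < G (!b)) : G' b = G b := by
  refine le_antisymm ?_ (str_mono h h' b)
  by_contra! hc
  obtain ⟨j, hj, hjb⟩ := h'.t2 b
  have hj1 : Sp v n (j + 1) := sp_shift 1 hj
  have hj2 : Sp v n (j + G' b + 1) := sp_shift 1 (h'.t4 b j hj hjb).1
  have a1 := (h.t3 b).1
  obtain ⟨i, b1, h1, h2, h3, h4⟩ := str_pred h (j + 1) (j + G' b + 1) hj1 hj2 (by omega)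
  have hb1 : b1 = b := by
    by_contra hb
    have : b1 = !b := by cases b <;> cases b1 <;> simp_all
    rw [this] at h4
    omega
  subst hb1
  obtain ⟨i2, b2, k1, k2, k3, k4⟩ := str_pred h (j + 1) i hj1 h2 (by omega)
  have hb2 : b2 = b1 := by
    by_contra hb
    have : b2 = !b1 := by cases b1 <;> cases b2 <;> simp_all
    rw [this] at k4
    omega
  subst hb2
  have e1 := h.t5 b2 i2 i k2 k3 h2 h3 (G b2 - 1) (by omega)
  rw [show i2 + (G b2 - 1) = i - 1 by omega, show i + (G b2 - 1) = j + G' b2 by omega] at e1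
  have e2 : agr v (n + 1) (i - 1) (j + G' b2) := by
    apply agr_cons e1
    rw [show i - 1 + 1 = i by omega]
    exact h.t6 _ _ h2 hj2
  have e3 : Sp v (n + 1) (i - 1) := sp_agr (h'.t4 b2 j hj hjb).1 (agr_symm e2)
  exact (h'.t4 b2 j hj hjb).2 (i - 1 - j) (by omega) (by omega) (by rwa [show j + (i - 1 - j) = i - 1 by omega])

lemma balanced (v : ℕ → ℕ) (q : ℕ) (hv : ∀ i, v i < q)
    (hap : ∀ i j, i < j → ∃ t, v (i + t) ≠ v (j + t)) (C n0 : ℕ) (hcx : ∀ n ≥ n0, cx v n = n + C)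
    (hrec : ∀ n i k, ∃ j ≥ k, agr v n i j) (lt : Bool → ℕ) (G : ℕ → Bool → ℕ)
    (hS : ∀ n ≥ n0, Str v n C lt (G n)) (N : ℕ) : ∃ n ≥ N, n0 ≤ n ∧ ∀ b, n ≤ 4 * G n b := by
  by_contra! hc
  have hc' : ∀ n ≥ N + n0 + 1, ∃ b, 4 * G n b < n := fun n hn => hc n (by omega) (by omega)
  set N1 := N + n0 + 1
  obtain ⟨b0, hb0⟩ := hc' N1 le_rfl
  have hsum : ∀ n ≥ N1, ∀ b, n + C ≤ G n b + G n (!b) := fun n hn b =>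
    str_sum (hS n (by omega)) (hcx n (by omega)) hrec b
  have hsm : ∀ n ≥ N1, 4 * G n b0 < n := by
    intro n hn
    induction n, hn using Nat.le_induction with
    | base => exact hb0
    | succ n hn ih =>
      obtain ⟨b, hb⟩ := hc' (n + 1) (by omega)
      by_cases h : b = b0
      · exact h ▸ hb
      · have : b = !b0 := by cases b <;> cases b0 <;> simp_all
        rw [this] at hb
        have h1 := str_mono (hS n (by omega)) (hS (n + 1) (by omega)) (!b0)
        have h2 := hsum n hn b0
        omega
  have hconst : ∀ n ≥ N1, G n b0 = G N1 b0 := by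
    intro n hn
    induction n, hn using Nat.le_induction with
    | base => rfl
    | succ n hn ih =>
      rw [← ih]
      apply str_const (hS n (by omega)) (hS (n + 1) (by omega))
      have h1 := hsm (n + 1) (by omega)
      have h2 := hsm n hn
      have h3 := hsum n hn b0
      omega
  set a := G N1 b0
  have ha : 1 ≤ a := ((hS N1 (by omega)).t3 b0).1
  have hper : ∀ n ≥ N1, ∀ i, Sp v n i → ∀ t, t + a < n → v (i + t) = v (i + t + a) := by
    intro n hn i hi t ht
    have h := hS n (by omega)
    obtain ⟨j, hj, hjb⟩ := h.t2 b0
    have hja := (h.t4 b0 j hj hjb).1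
    rw [hconst n hn] at hja
    have e1 := h.t6 i j hi hj (t + a) (by omega)
    have e2 := h.t6 i (j + a) hi hja t (by omega)
    rw [add_assoc, e2, e1]; congr 1; ring
  have hdef : ∀ k, ∃ j ≥ k, v j ≠ v (j + a) := by
    intro k
    obtain ⟨t, ht⟩ := hap k (k + a) (by omega)
    exact ⟨k + t, by omega, by rwa [show k + t + a = k + a + t by ring]⟩
  obtain ⟨j1, -, hj1⟩ := hdef 0
  obtain ⟨j2, hj2, hj2'⟩ := hdef (j1 + a + C + 1)
  set g := j2 - j1
  set n := N1 + g + a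
  obtain ⟨s0, -, -, hs0⟩ := sp_ex v q hv hap n 0
  obtain ⟨j1', hj1', hag⟩ := hrec (g + a + 1) j1 s0
  have d1 : v j1' ≠ v (j1' + a) := by
    have e1 := hag 0 (by omega)
    have e2 := hag a (by omega)
    simp only [add_zero] at e1
    rwa [← e1, ← e2]
  have d2 : v (j1' + g) ≠ v (j1' + g + a) := by
    have e1 := hag g (by omega)
    have e2 := hag (g + a) (by omega)
    rw [← add_assoc, ← add_assoc] at e2
    rw [← e1, ← e2]
    rwa [show j1 + g = j2 by omega]
  have h := hS n (by omega)
  obtain ⟨i, b, s, k1, k2, k3, k4, k5⟩ := str_prev h s0 hs0 (j1' - s0)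
  have k6 := (h.t3 b).2
  have k7 := (h.t4 b i k2 k3).1
  have f1 : n ≤ s + a := by
    by_contra hlt
    apply d1
    have := hper n (by omega) i k2 s (by omega)
    rwa [show i + s = j1' by omega] at this
  apply d2
  have := hper n (by omega) _ k7 (j1' + g - (i + G n b)) (by omega)
  rwa [show i + G n b + (j1' + g - (i + G n b)) = j1' + g by omega] at this

noncomputable def posr (v : ℕ → ℕ) (n : ℕ) (lt : Bool → ℕ) (G : Bool → ℕ) (i0 : ℕ) : ℕ → ℕ
  | 0 => i0
  | k + 1 => posr v n lt G i0 k + G (decide (v (posr v n lt G i0 k + n) = lt true))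

lemma combin (u : ℕ → ℕ) (q : ℕ) (hu : ∀ i, u i < q)
    (hap : ∀ i j, i < j → ∃ t, u (i + t) ≠ u (j + t)) (C0 : ℕ) (hC : ∃ᶠ n in atTop, cx u n ≤ n + C0) :
    ∃ C' : ℕ, ∀ N : ℕ, ∃ n ≥ N, ∃ (i0 : ℕ) (G : Bool → ℕ) (w : ℕ → Bool) (A : Bool → ℕ → ℕ),
      (∀ b t, A b t < q) ∧      i0 ≤ n + C' ∧ (∀ b, n ≤ 4 * G b) ∧ (∀ b, G b ≤ n + C') ∧
      ∀ k, ∀ t < G (w k), u (i0 + ∑ l ∈ Finset.range k, G (w l) + t) = A (w k) t := by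
  obtain ⟨k0, C, n0, hcx, hrec⟩ := reduce u q hu hap C0 hC
  set v : ℕ → ℕ := fun i => u (k0 + i) with hvdef
  have hv : ∀ i, v i < q := fun i => hu _
  have hapv : ∀ i j, i < j → ∃ t, v (i + t) ≠ v (j + t) := by
    intro i j hij
    obtain ⟨t, ht⟩ := hap (k0 + i) (k0 + j) (by omega)
    exact ⟨t, by simpa [hvdef, add_assoc] using ht⟩
  obtain ⟨lt, hlt, hS⟩ := str_ex v q hv hapv C n0 hcx
  have : ∀ n, ∃ G, n0 ≤ n → Str v n C lt G := by
    intro n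
    by_cases h : n0 ≤ n
    · obtain ⟨G, hG⟩ := hS n h
      exact ⟨G, fun _ => hG⟩
    · exact ⟨fun _ => 0, fun h' => absurd h' h⟩
  choose G hG using this
  refine ⟨k0 + C, fun N => ?_⟩
  obtain ⟨n, hn, hn0, hbal⟩ := balanced v q hv hapv C n0 hcx hrec lt G hG N
  have h := hG n hn0
  obtain ⟨s0, -, hs0, hs0'⟩ := sp_ex v q hv hapv n 0
  rw [hcx n hn0] at hs0
  choose rep hrep hrepb using h.t2
  set w : ℕ → Bool := fun k => decide (v (posr v n lt (G n) s0 k + n) = lt true) with hw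
  have hpos : ∀ k, posr v n lt (G n) s0 k = s0 + ∑ l ∈ Finset.range k, G n (w l) := by
    intro k
    induction k with
    | zero => simp [posr]
    | succ k ih => rw [Finset.sum_range_succ, ← add_assoc, ← ih]; rfl
  have hlet : ∀ p, Sp v n p → v (p + n) = lt (decide (v (p + n) = lt true)) := by
    intro p hp
    obtain ⟨b, hb⟩ := h.t1 p hp
    by_cases hd : v (p + n) = lt true
    · simp [hd]
    · cases b
      · simp only [hd, decide_false]; exact hb
      · exact absurd hb hd
  have hsp : ∀ k, Sp v n (posr v n lt (G n) s0 k) := by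
    intro k
    induction k with
    | zero => exact hs0'
    | succ k ih => exact (h.t4 _ _ ih (hlet _ ih)).1
  refine ⟨n, hn, k0 + s0, G n, w, fun b t => v (rep b + t), fun b t => hv _, by omega, hbal, fun b => ?_, ?_⟩
  · have := (h.t3 b).2; omega
  · intro k t ht
    have := h.t5 (w k) _ (rep (w k)) (hsp k) (hlet _ (hsp k)) (hrep _) (hrepb _) t (by omega)
    rw [hpos] at this
    simpa [hvdef, add_assoc] using this

noncomputable def tau (q : ℕ) (x : ℝ) (i : ℕ) : ℝ := Int.fract (x * (q : ℝ) ^ i)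

lemma tau_step (q : ℕ) (hq : 2 ≤ q) (x : ℝ) (hx : 0 < x) (i : ℕ) :
    (q : ℝ) * tau q x i = qdigit q x i + tau q x (i + 1) := by
  have hq0 : (0 : ℝ) < q := by exact_mod_cast (by omega : 0 < q)
  have h1 : ⌊x * (q : ℝ) ^ i⌋ = ⌊x * (q : ℝ) ^ (i + 1)⌋ / (q : ℤ) := by
    rw [← Int.floor_div_natCast]
    congr 1
    rw [pow_succ]; field_simp
  have h0 : 0 ≤ ⌊x * (q : ℝ) ^ (i + 1)⌋ := Int.floor_nonneg.2 (by positivity)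
  have h2 : ((qdigit q x i : ℕ) : ℤ) = ⌊x * (q : ℝ) ^ (i + 1)⌋ % (q : ℤ) := by
    rw [qdigit, Int.natCast_mod, Int.toNat_of_nonneg h0]
  have h3 := Int.mul_ediv_add_emod ⌊x * (q : ℝ) ^ (i + 1)⌋ (q : ℤ)
  rw [← h1, ← h2] at h3
  have h4 : (q : ℝ) * (⌊x * (q : ℝ) ^ i⌋ : ℝ) + (qdigit q x i : ℝ) = (⌊x * (q : ℝ) ^ (i + 1)⌋ : ℝ) := by
    exact_mod_cast h3
  unfold tau Int.fract
  rw [← h4, pow_succ]; ring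

/-- value of a block -/
def bval (q : ℕ) (A : ℕ → ℕ) : ℕ → ℕ
  | 0 => 0
  | a + 1 => q * bval q A a + A a

lemma bval_congr (q : ℕ) (A B : ℕ → ℕ) (a : ℕ) (h : ∀ t < a, A t = B t) : bval q A a = bval q B a := by
  induction a with
  | zero => rfl
  | succ a ih =>
    rw [bval, bval, ih (fun t ht => h t (by omega)), h a (by omega)]

lemma bval_lt (q : ℕ) (A : ℕ → ℕ) (hA : ∀ t, A t < q) (a : ℕ) : bval q A a + 1 ≤ q ^ a := by
  induction a with
  | zero => simp [bval]
  | succ a ih =>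
    rw [bval, pow_succ]
    have := hA a
    nlinarith

lemma tau_block (q : ℕ) (hq : 2 ≤ q) (x : ℝ) (hx : 0 < x) (p a : ℕ) :
    (q : ℝ) ^ a * tau q x p = bval q (fun t => qdigit q x (p + t)) a + tau q x (p + a) := by
  induction a with
  | zero => simp [bval]
  | succ a ih =>
    have h := tau_step q hq x hx (p + a)
    rw [bval, pow_succ, mul_assoc, mul_comm (q : ℝ) (tau q x p), ← mul_assoc, ih]
    push_cast
    rw [← add_assoc p a 1, add_mul, mul_comm (tau q x (p + a)), h]; ring

lemma tau_irr (q : ℕ) (hq : 2 ≤ q) (x : ℝ) (hirr : Irrational x) (p : ℕ) (g h : ℤ) (hg : g ≠ 0)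
    (he : (g : ℝ) * tau q x p = h) : False := by
  have hq0 : (q : ℝ) ≠ 0 := by exact_mod_cast (by omega : q ≠ 0)
  have hg' : (g : ℝ) ≠ 0 := by exact_mod_cast hg
  apply hirr
  refine ⟨((h : ℚ) / g + ⌊x * (q : ℝ) ^ p⌋) / (q : ℚ) ^ p, ?_⟩
  have : tau q x p = h / g := by field_simp; linarith
  unfold tau Int.fract at this
  push_cast
  rw [← this]; field_simp; ring

lemma digits_aper (q : ℕ) (hq : 2 ≤ q) (x : ℝ) (hx : 0 < x) (hirr : Irrational x) (i j : ℕ) (hij : i < j) :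
    ∃ t, qdigit q x (i + t) ≠ qdigit q x (j + t) := by
  by_contra! hc
  have hq1 : (1 : ℝ) < q := by exact_mod_cast (by omega : 1 < q)
  have h1 : ∀ a, |tau q x i - tau q x j| ≤ ((q : ℝ)⁻¹) ^ a := by
    intro a
    have e1 := tau_block q hq x hx i a
    have e2 := tau_block q hq x hx j a
    rw [bval_congr q _ (fun t => qdigit q x (j + t)) a (fun t _ => hc t)] at e1
    have e3 : (q : ℝ) ^ a * (tau q x i - tau q x j) = tau q x (i + a) - tau q x (j + a) := by linarith
    have e4 : |tau q x (i + a) - tau q x (j + a)| ≤ 1 := by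
      have := Int.fract_nonneg (x * (q : ℝ) ^ (i + a))
      have := Int.fract_nonneg (x * (q : ℝ) ^ (j + a))
      have := Int.fract_lt_one (x * (q : ℝ) ^ (i + a))
      have := Int.fract_lt_one (x * (q : ℝ) ^ (j + a))
      unfold tau
      rw [abs_le]; constructor <;> linarith
    rw [← e3, abs_mul, abs_of_pos (by positivity)] at e4
    rw [inv_pow, ← one_div, le_div_iff₀ (by positivity)]
    linarith
  have h2 : |tau q x i - tau q x j| ≤ 0 :=
    ge_of_tendsto' (tendsto_pow_atTop_nhds_zero_of_lt_one (by positivity) (inv_lt_one_of_one_lt₀ hq1)) h1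
  have h3 : tau q x i = tau q x j := by
    have := abs_nonpos_iff.1 h2; linarith
  apply hirr
  have hne : (q : ℝ) ^ j - (q : ℝ) ^ i ≠ 0 := by
    have := pow_lt_pow_right₀ hq1 hij
    linarith
  refine ⟨((⌊x * (q : ℝ) ^ j⌋ : ℚ) - ⌊x * (q : ℝ) ^ i⌋) / ((q : ℚ) ^ j - (q : ℚ) ^ i), ?_⟩
  unfold tau Int.fract at h3
  push_cast
  rw [div_eq_iff hne]; linarith

/-- expansion of the basic quantity -/
lemma expand (q : ℕ) (hq : 2 ≤ q) (κ : ℝ) (G : ℕ → ℕ) (w : ℕ → Bool) (Y : ℕ → ℝ)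
    (hY : ∀ k, Y k = (if w k = true then κ else 0) + ((q : ℝ) ^ G k)⁻¹ * Y (k + 1)) (K : ℕ) :
    Y 0 = κ * (∑ k ∈ Finset.range K, if w k = true then ((q : ℝ) ^ (∑ l ∈ Finset.range k, G l))⁻¹ else 0) +
      ((q : ℝ) ^ (∑ l ∈ Finset.range K, G l))⁻¹ * Y K := by
  induction K with
  | zero => simp
  | succ K ih =>
    rw [ih, hY K, Finset.sum_range_succ, Finset.sum_range_succ, pow_add, mul_inv]
    split_ifs <;> ring

lemma pern (q : ℕ) (hq : 2 ≤ q) (x : ℝ) (hx : x ∈ Set.Ioo 0 1) (hirr : Irrational x) (i0 : ℕ) (G : Bool → ℕ)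
    (hG : ∀ b, 1 ≤ G b) (w : ℕ → Bool) (A : Bool → ℕ → ℕ) (hA : ∀ b t, A b t < q)
    (h : ∀ k, ∀ t < G (w k), qdigit q x (i0 + ∑ l ∈ Finset.range k, G (w l) + t) = A (w k) t) :
    ∃ (y : ℝ) (g h κ : ℤ), g ≠ 0 ∧ κ ≠ 0 ∧ κ * y = g * x + h ∧
      |(g : ℝ)| ≤ (q : ℝ) ^ (G true + G false + i0 + 1) ∧ |(h : ℝ)| ≤ (q : ℝ) ^ (G true + G false + i0 + 1) ∧
      |(κ : ℝ)| ≤ (q : ℝ) ^ (G true + G false + i0 + 1) ∧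
      ∀ K, |y - ∑ k ∈ Finset.range K, if w k = true then ((q : ℝ) ^ (∑ l ∈ Finset.range k, G (w l)))⁻¹ else 0| ≤
        (q : ℝ) ^ (G true + G false) * ((q : ℝ) ^ (∑ l ∈ Finset.range K, G (w l)))⁻¹ := by
  have hq1 : (1 : ℝ) < q := by exact_mod_cast (by omega : 1 < q)
  have hq2 : (2 : ℝ) ≤ q := by exact_mod_cast hq
  have hq0 : (0 : ℝ) < q := by linarith
  set a := G true with ha
  set b := G false with hb
  set Ah := bval q (A true) a with hAh
  set Bh := bval q (A false) b with hBh
  have hA1 : (Ah : ℝ) + 1 ≤ (q : ℝ) ^ a := by exact_mod_cast bval_lt q (A true) (hA true) a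
  have hB1 : (Bh : ℝ) + 1 ≤ (q : ℝ) ^ b := by exact_mod_cast bval_lt q (A false) (hA false) b
  have hA0 : (0 : ℝ) ≤ Ah := Nat.cast_nonneg _
  have hB0 : (0 : ℝ) ≤ Bh := Nat.cast_nonneg _
  have hqa : (1 : ℝ) ≤ (q : ℝ) ^ a := one_le_pow₀ hq1.le
  have hqb : (1 : ℝ) < (q : ℝ) ^ b := one_lt_pow₀ hq1 (by have := hG false; omega)
  have hqi : (1 : ℝ) ≤ (q : ℝ) ^ i0 := one_le_pow₀ hq1.le
  set T : ℕ → ℝ := fun k => tau q x (i0 + ∑ l ∈ Finset.range k, G (w l)) with hT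
  have hT0 : ∀ k, 0 ≤ T k := fun k => Int.fract_nonneg _
  have hT1 : ∀ k, T k ≤ 1 := fun k => (Int.fract_lt_one _).le
  have hTs : ∀ k, (q : ℝ) ^ G (w k) * T k = bval q (A (w k)) (G (w k)) + T (k + 1) := by
    intro k
    simp only [hT]
    rw [tau_block q hq x hx.1, bval_congr q _ _ _ (h k), Finset.sum_range_succ, add_assoc i0]
  set κ : ℤ := Ah * ((q : ℤ) ^ b - 1) - Bh * ((q : ℤ) ^ a - 1) with hκ
  have hκr : (κ : ℝ) = Ah * ((q : ℝ) ^ b - 1) - Bh * ((q : ℝ) ^ a - 1) := by rw [hκ]; push_cast; ring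
  set Y : ℕ → ℝ := fun k => (q : ℝ) ^ a * ((q : ℝ) ^ b - 1) * T k - Bh * (q : ℝ) ^ a with hYd
  have hY : ∀ k, Y k = (if w k = true then (κ : ℝ) else 0) + ((q : ℝ) ^ G (w k))⁻¹ * Y (k + 1) := by
    intro k
    have h1 := hTs k
    have hpa : (q : ℝ) ^ a ≠ 0 := by positivity
    have hpb : (q : ℝ) ^ b ≠ 0 := by positivity
    cases hw : w k
    · rw [hw] at h1
      have h2 : T (k + 1) = (q : ℝ) ^ b * T k - Bh := by rw [h1]; ring
      simp only [hYd, h2, ← hb]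
      field_simp
      simp
      ring
    · rw [hw] at h1
      have h2 : T (k + 1) = (q : ℝ) ^ a * T k - Ah := by rw [h1]; ring
      simp only [hYd, h2, ← ha, if_true, hκr]
      field_simp
      ring
  have hYb : ∀ k, |Y k| ≤ (q : ℝ) ^ (a + b) := by
    intro k
    have e : Y k = (q : ℝ) ^ a * (((q : ℝ) ^ b - 1) * T k - Bh) := by simp only [hYd]; ring
    rw [e, abs_mul, abs_of_pos (by positivity), pow_add]
    apply mul_le_mul_of_nonneg_left _ (by positivity)
    have := hT0 k
    have := hT1 k
    rw [abs_le]
    constructor <;> nlinarith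
  have hex := expand q hq (κ : ℝ) (fun k => G (w k)) w Y hY
  have hκ0 : κ ≠ 0 := by
    intro h0
    have h1 : ∀ K, |Y 0| ≤ (q : ℝ) ^ (a + b) * ((q : ℝ)⁻¹) ^ K := by
      intro K
      have e1 := hex K
      rw [h0, Int.cast_zero, zero_mul, zero_add] at e1
      rw [e1, abs_mul, mul_comm]
      apply mul_le_mul (hYb K) _ (abs_nonneg _) (by positivity)
      rw [abs_of_pos (by positivity), inv_pow]
      apply inv_anti₀ (by positivity)
      apply pow_le_pow_right₀ hq1.le
      calc K = ∑ l ∈ Finset.range K, 1 := by simp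
        _ ≤ _ := Finset.sum_le_sum fun l _ => hG _
    have h2 : |Y 0| ≤ (q : ℝ) ^ (a + b) * 0 :=
      ge_of_tendsto' ((tendsto_pow_atTop_nhds_zero_of_lt_one (by positivity)
        (inv_lt_one_of_one_lt₀ hq1)).const_mul _) h1
    have h3 : Y 0 = 0 := abs_nonpos_iff.1 (by simpa using h2)
    refine tau_irr q hq x hirr i0 ((q : ℤ) ^ a * ((q : ℤ) ^ b - 1)) (Bh * (q : ℤ) ^ a) ?_ ?_
    · have : ((((q : ℤ) ^ a * ((q : ℤ) ^ b - 1) : ℤ)) : ℝ) ≠ 0 := by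
        push_cast
        apply ne_of_gt
        apply mul_pos (by positivity) (by linarith)
      exact_mod_cast this
    · push_cast
      simp only [hYd, hT, Finset.range_zero, Finset.sum_empty, add_zero] at h3
      linarith
  set N : ℤ := ⌊x * (q : ℝ) ^ i0⌋ with hN
  have hN0 : (0 : ℝ) ≤ N := by exact_mod_cast Int.floor_nonneg.2 (by have := hx.1; positivity)
  have hN1 : (N : ℝ) ≤ (q : ℝ) ^ i0 := by
    have := Int.floor_le (x * (q : ℝ) ^ i0)
    have := hx.2
    rw [← hN] at *
    nlinarith
  have hκr0 : (κ : ℝ) ≠ 0 := by exact_mod_cast hκ0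
  have hκ1 : (1 : ℝ) ≤ |(κ : ℝ)| := by exact_mod_cast Int.one_le_abs hκ0
  have hpab : (q : ℝ) ^ (a + b + i0 + 1) = (q : ℝ) ^ a * (q : ℝ) ^ b * (q : ℝ) ^ i0 * q := by
    rw [pow_succ, pow_add, pow_add]
  have hP : 0 < (q : ℝ) ^ a * (q : ℝ) ^ b * (q : ℝ) ^ i0 := by positivity
  have hPq : (q : ℝ) ^ a * (q : ℝ) ^ b * (q : ℝ) ^ i0 * 2 ≤ (q : ℝ) ^ a * (q : ℝ) ^ b * (q : ℝ) ^ i0 * q :=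
    mul_le_mul_of_nonneg_left hq2 hP.le
  have hPab : (q : ℝ) ^ a * (q : ℝ) ^ b ≤ (q : ℝ) ^ a * (q : ℝ) ^ b * (q : ℝ) ^ i0 :=
    le_mul_of_one_le_right (by positivity) hqi
  refine ⟨Y 0 / κ, (q : ℤ) ^ (a + i0) * ((q : ℤ) ^ b - 1), -((q : ℤ) ^ a * ((q : ℤ) ^ b - 1) * N) - Bh * (q : ℤ) ^ a,
    κ, ?_, hκ0, ?_, ?_, ?_, ?_, ?_⟩
  · have : ((((q : ℤ) ^ (a + i0) * ((q : ℤ) ^ b - 1) : ℤ)) : ℝ) ≠ 0 := by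
      push_cast
      apply ne_of_gt
      apply mul_pos (by positivity) (by linarith)
    exact_mod_cast this
  · rw [mul_div_cancel₀ _ hκr0]
    simp only [hYd, hT, Finset.range_zero, Finset.sum_empty, add_zero, tau, Int.fract]
    push_cast
    rw [pow_add]; ring
  · push_cast
    rw [abs_of_nonneg (mul_nonneg (by positivity) (by linarith)), hpab, pow_add]
    have : (q : ℝ) ^ a * (q : ℝ) ^ i0 * ((q : ℝ) ^ b - 1) ≤ (q : ℝ) ^ a * (q : ℝ) ^ i0 * (q : ℝ) ^ b :=
      mul_le_mul_of_nonneg_left (by linarith) (by positivity)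
    linarith
  · push_cast
    have e1 : (q : ℝ) ^ a * ((q : ℝ) ^ b - 1) * N ≤ (q : ℝ) ^ a * (q : ℝ) ^ b * (q : ℝ) ^ i0 := by
      apply mul_le_mul _ hN1 hN0 (by positivity)
      exact mul_le_mul_of_nonneg_left (by linarith) (by positivity)
    have e2 : 0 ≤ (q : ℝ) ^ a * ((q : ℝ) ^ b - 1) * N :=
      mul_nonneg (mul_nonneg (by positivity) (by linarith)) hN0
    have e3 : (Bh : ℝ) * (q : ℝ) ^ a ≤ (q : ℝ) ^ b * (q : ℝ) ^ a :=
      mul_le_mul_of_nonneg_right (by linarith) (by positivity)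
    have e4 : 0 ≤ (Bh : ℝ) * (q : ℝ) ^ a := by positivity
    rw [hpab, abs_le]
    constructor <;> linarith
  · rw [hκr, hpab]
    have e1 : (Ah : ℝ) * ((q : ℝ) ^ b - 1) ≤ (q : ℝ) ^ a * (q : ℝ) ^ b :=
      mul_le_mul (by linarith) (by linarith) (by linarith) (by positivity)
    have e2 : (Bh : ℝ) * ((q : ℝ) ^ a - 1) ≤ (q : ℝ) ^ b * (q : ℝ) ^ a :=
      mul_le_mul (by linarith) (by linarith) (by linarith) (by positivity)
    have e3 : 0 ≤ (Ah : ℝ) * ((q : ℝ) ^ b - 1) := mul_nonneg hA0 (by linarith)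
    have e4 : 0 ≤ (Bh : ℝ) * ((q : ℝ) ^ a - 1) := mul_nonneg hB0 (by linarith)
    rw [abs_le]
    constructor <;> linarith
  · intro K
    have e1 := hex K
    have e2 : Y 0 / κ - (∑ k ∈ Finset.range K, if w k = true then ((q : ℝ) ^ (∑ l ∈ Finset.range k, G (w l)))⁻¹ else 0)
        = ((q : ℝ) ^ (∑ l ∈ Finset.range K, G (w l)))⁻¹ * Y K / κ := by
      rw [e1]; field_simp; ring
    rw [e2, abs_div, abs_mul, abs_of_pos (by positivity : (0:ℝ) < ((q : ℝ) ^ (∑ l ∈ Finset.range K, G (w l)))⁻¹), mul_comm]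
    refine (div_le_self (by positivity) hκ1).trans ?_
    exact mul_le_mul_of_nonneg_right (hYb K) (by positivity)

lemma mw_add {r : ℕ} (m : Fin r → ℕ) (γ δ : Fin r →₀ ℕ) : mw m (γ + δ) = mw m γ + mw m δ := by
  simp [mw, add_mul, Finset.sum_add_distrib]

lemma mw_wpos {r : ℕ} (m : Fin r → ℕ) (e : Bool → (Fin r →₀ ℕ)) (w : ℕ → Bool) (k : ℕ) :
    mw m (wpos e w k) = ∑ l ∈ Finset.range k, mw m (e (w l)) := by
  unfold wpos
  induction k with
  | zero => simp [mw]
  | succ k ih => rw [Finset.sum_range_succ, Finset.sum_range_succ, mw_add, ih]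

lemma aeval_wtr (q : ℕ) {r : ℕ} (m : Fin r → ℕ) (e : Bool → (Fin r →₀ ℕ)) (ρ : Bool → ℚ) (w : ℕ → Bool)
    (G : Bool → ℕ) (hl : ∀ b, ((ρ b : ℚ) : ℝ) * ((q : ℝ) ^ mw m (e b))⁻¹ = ((q : ℝ) ^ G b)⁻¹) (K : ℕ) :
    MvPolynomial.aeval (sv q m) (wtr e ρ w K) =
      ∑ k ∈ Finset.range K, if w k = true then ((q : ℝ) ^ (∑ l ∈ Finset.range k, G (w l)))⁻¹ else 0 := by
  unfold wtr
  rw [map_sum]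
  refine Finset.sum_congr rfl fun k _ => ?_
  split_ifs
  · rw [MvPolynomial.aeval_monomial, Finsupp.prod_fintype _ _ (fun i => pow_zero _), sv_mon, mw_wpos]
    unfold wrho
    simp only [eq_ratCast, Rat.cast_prod]
    rw [← Finset.prod_pow_eq_pow_sum, ← Finset.prod_pow_eq_pow_sum, ← Finset.prod_inv_distrib,
      ← Finset.prod_inv_distrib, ← Finset.prod_mul_distrib]
    exact Finset.prod_congr rfl fun l _ => hl _
  · simp

/-- The data extracted from the digits. -/
structure Dat (x : ℝ) (q : ℕ) (C : ℕ) (nn : ℕ → ℕ) (G : ℕ → Bool → ℕ) (w : ℕ → ℕ → Bool)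
    (y : ℕ → ℝ) (g h κ : ℕ → ℤ) : Prop where
  d1 : ∀ N, N ≤ nn N
  d2 : ∀ N b, nn N ≤ 4 * G N b
  d3 : ∀ N b, G N b ≤ nn N + C
  d4 : ∀ N, g N ≠ 0 ∧ κ N ≠ 0 ∧ κ N * y N = g N * x + h N
  d5 : ∀ N, |(g N : ℝ)| ≤ (q : ℝ) ^ (3 * (nn N + C) + 1) ∧ |(h N : ℝ)| ≤ (q : ℝ) ^ (3 * (nn N + C) + 1) ∧
    |(κ N : ℝ)| ≤ (q : ℝ) ^ (3 * (nn N + C) + 1)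
  d6 : ∀ N K, |y N - ∑ k ∈ Finset.range K, if w N k = true then ((q : ℝ) ^ (∑ l ∈ Finset.range k, G N (w N l)))⁻¹ else 0| ≤
        (q : ℝ) ^ (G N true + G N false) * ((q : ℝ) ^ (∑ l ∈ Finset.range K, G N (w N l)))⁻¹

lemma assemble (x : ℝ) (hirr : Irrational x) (halg : IsAlgebraic ℚ x) (q : ℕ) (hq : 2 ≤ q)
    (C : ℕ) (nn : ℕ → ℕ) (G : ℕ → Bool → ℕ) (w : ℕ → ℕ → Bool)
    (y : ℕ → ℝ) (g h κ : ℕ → ℤ) (hD : Dat x q C nn G w y g h κ)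
    (𝓤 : Ultrafilter ℕ) (hU : (𝓤 : Filter ℕ) ≤ atTop) {r : ℕ} (H : ℕ → ℕ) (c0 : ℕ) (m : ℕ → Fin r → ℕ)
    (hHa : ∀ᶠ N in (𝓤 : Filter ℕ), H N ≤ G N true) (hHn : ∀ᶠ N in (𝓤 : Filter ℕ), nn N ≤ c0 * H N)
    (hm1 : ∀ᶠ n in (𝓤 : Filter ℕ), ∀ i, H n ≤ m n i) (hm2 : ∀ᶠ n in (𝓤 : Filter ℕ), ∀ i, m n i ≤ nn n + C)
    (hres : ∀ γ γ' : Fin r →₀ ℕ, γ ≠ γ' → ∀ C : ℕ, ∀ᶠ n in (𝓤 : Filter ℕ),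
      mw (m n) γ + C < mw (m n) γ' ∨ mw (m n) γ' + C < mw (m n) γ)
    (e : Bool → (Fin r →₀ ℕ)) (ρ : Bool → ℚ) (he : ∀ b, 1 ≤ Finsupp.degree (e b)) (hρ : ∀ b, ρ b ≠ 0)
    (hl : ∀ᶠ N in (𝓤 : Filter ℕ), ∀ b, ((ρ b : ℚ) : ℝ) * ((q : ℝ) ^ mw (m N) (e b))⁻¹ = ((q : ℝ) ^ G N b)⁻¹) :
    False := by
  have hq1 : (1 : ℝ) ≤ q := by exact_mod_cast (by omega : 1 ≤ q)
  have hq0 : (0 : ℝ) < q := by linarith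
  have hge : ∀ k : ℕ, ∀ᶠ N in (𝓤 : Filter ℕ), k ≤ N := fun k => hU (eventually_ge_atTop k)
  have hHt : Tendsto H (𝓤 : Filter ℕ) atTop := by
    rw [tendsto_atTop]
    intro b
    filter_upwards [hHn, hge (c0 * b + 1)] with N h1 h2
    have := hD.d1 N
    by_contra hc
    have : c0 * H N ≤ c0 * b := Nat.mul_le_mul_left _ (by omega)
    omega
  set c := 3 * c0 + 3 * C + 1 with hc
  have hcH : ∀ᶠ N in (𝓤 : Filter ℕ), 3 * (nn N + C) + 1 ≤ c * H N := by
    filter_upwards [hHn, hHt.eventually_ge_atTop 1] with N h1 h2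
    rw [hc]
    nlinarith
  set W : ℕ → Bool := fun k => decide (∀ᶠ N in (𝓤 : Filter ℕ), w N k = true) with hW
  have hWk : ∀ k, ∀ᶠ N in (𝓤 : Filter ℕ), w N k = W k := by
    intro k
    by_cases hk : ∀ᶠ N in (𝓤 : Filter ℕ), w N k = true
    · have : W k = true := by simp [hW, hk]
      rw [this]; exact hk
    · have : W k = false := by simp only [hW, hk, decide_false]
      rw [this]
      have := Ultrafilter.eventually_not.2 hk
      filter_upwards [this] with N hN
      simpa using hN
  have hWK : ∀ K, ∀ᶠ N in (𝓤 : Filter ℕ), ∀ k < K, w N k = W k := by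
    intro K
    have := (Filter.eventually_all_finset (Finset.range K) (l := (𝓤 : Filter ℕ)) (p := fun k N => w N k = W k)).2
      (fun k _ => hWk k)
    filter_upwards [this] with N hN k hk
    exact hN k (Finset.mem_range.2 hk)
  refine general x hirr halg q hq 𝓤 H hHt c m hm1 ?_ hres y g h κ (Eventually.of_forall hD.d4) ?_ e ρ W he hρ ?_
  · filter_upwards [hm2, hcH] with N h1 h2 i
    have := h1 i
    omega
  · filter_upwards [hcH] with N h1
    have h2 := pow_le_pow_right₀ hq1 h1
    obtain ⟨a1, a2, a3⟩ := hD.d5 N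
    exact ⟨a1.trans h2, a2.trans h2, a3.trans h2⟩
  · intro K
    refine ⟨8 * (K + c), by omega, 1, ?_⟩
    filter_upwards [hWK (8 * (K + c)), hl, hcH, hHa, hge C] with N h1 h2 h3 h4 h5
    set K' := 8 * (K + c) with hK'
    have e1 := hD.d6 N K'
    have e2 : (∑ k ∈ Finset.range K', if w N k = true then ((q : ℝ) ^ (∑ l ∈ Finset.range k, G N (w N l)))⁻¹ else 0)
        = MvPolynomial.aeval (sv q (m N)) (wtr e ρ W K') := by
      rw [aeval_wtr q (m N) e ρ W (G N) h2]
      refine Finset.sum_congr rfl fun k hk => ?_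
      rw [Finset.mem_range] at hk
      rw [h1 k hk, Finset.sum_congr rfl fun l hl => by rw [h1 l (by rw [Finset.mem_range] at hl; omega)]]
    rw [e2] at e1
    refine e1.trans ?_
    rw [one_mul, ← div_eq_mul_inv, div_le_iff₀ (by positivity), ← div_eq_inv_mul, le_div_iff₀ (by positivity), ← pow_add]
    apply pow_le_pow_right₀ hq1
    have f1 : K' * nn N ≤ 4 * ∑ l ∈ Finset.range K', G N (w N l) := by
      rw [Finset.mul_sum]
      calc K' * nn N = ∑ l ∈ Finset.range K', nn N := by simp
        _ ≤ _ := Finset.sum_le_sum fun l _ => hD.d2 N _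
    have f2 : H N ≤ 2 * nn N := by
      have := hD.d3 N true
      have := hD.d1 N
      omega
    have f3 := hD.d3 N true
    have f4 := hD.d3 N false
    have f5 : (K + c) * H N ≤ (K + c) * (2 * nn N) := Nat.mul_le_mul_left _ f2
    have f6 : K' * nn N = 4 * ((K + c) * (2 * nn N)) := by rw [hK']; ring
    have f7 : (K + c) * H N = c * H N + K * H N := by ring
    omega

lemma dat_ex (x : ℝ) (hx : x ∈ Set.Ioo (0 : ℝ) 1) (hirr : Irrational x) (q : ℕ) (hq : 2 ≤ q) (C0 : ℕ)
    (hC : ∃ᶠ n in atTop, cx (qdigit q x) n ≤ n + C0) :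
    ∃ C nn G w y g h κ, Dat x q C nn G w y g h κ := by
  have hq1 : (1 : ℝ) ≤ q := by exact_mod_cast (by omega : 1 ≤ q)
  obtain ⟨C, hcomb⟩ := combin (qdigit q x) q (fun i => Nat.mod_lt _ (by omega))
    (digits_aper q hq x hx.1 hirr) C0 hC
  have hcomb' : ∀ N : ℕ, ∃ n ≥ N + 1, ∃ (i0 : ℕ) (G : Bool → ℕ) (w : ℕ → Bool) (A : Bool → ℕ → ℕ),
      (∀ b t, A b t < q) ∧ i0 ≤ n + C ∧ (∀ b, n ≤ 4 * G b) ∧ (∀ b, G b ≤ n + C) ∧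
      ∀ k, ∀ t < G (w k), qdigit q x (i0 + ∑ l ∈ Finset.range k, G (w l) + t) = A (w k) t := fun N => hcomb (N + 1)
  choose nn hnn i0 G w A hA hi0 hG1 hG2 hdig using hcomb'
  have hpern := fun N => pern q hq x hx hirr (i0 N) (G N) (fun b => by have := hG1 N b; have := hnn N; omega)
    (w N) (A N) (hA N) (hdig N)
  choose y g h κ hg hκ he b1 b2 b3 hap using hpern
  have hpow : ∀ N, (q : ℝ) ^ (G N true + G N false + i0 N + 1) ≤ (q : ℝ) ^ (3 * (nn N + C) + 1) := fun N =>
    pow_le_pow_right₀ hq1 (by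
      have := hG2 N true
      have := hG2 N false
      have := hi0 N
      omega)
  exact ⟨C, nn, G, w, y, g, h, κ, fun N => by have := hnn N; omega, hG1, hG2, fun N => ⟨hg N, hκ N, he N⟩,
    fun N => ⟨(b1 N).trans (hpow N), (b2 N).trans (hpow N), (b3 N).trans (hpow N)⟩, hap⟩

lemma dat_false (x : ℝ) (hirr : Irrational x) (halg : IsAlgebraic ℚ x) (q : ℕ) (hq : 2 ≤ q)
    (C : ℕ) (nn : ℕ → ℕ) (G : ℕ → Bool → ℕ) (w : ℕ → ℕ → Bool)
    (y : ℕ → ℝ) (g h κ : ℕ → ℤ) (hD : Dat x q C nn G w y g h κ) : False := by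
  have hq0 : (q : ℝ) ≠ 0 := by exact_mod_cast (by omega : q ≠ 0)
  have hq0' : (q : ℚ) ≠ 0 := by exact_mod_cast (by omega : q ≠ 0)
  set 𝓤 : Ultrafilter ℕ := hyperfilter ℕ
  have hU : (𝓤 : Filter ℕ) ≤ atTop := by
    rw [← Nat.cofinite_eq_atTop]; exact hyperfilter_le_cofinite
  have hge : ∀ k : ℕ, ∀ᶠ N in (𝓤 : Filter ℕ), k ≤ N := fun k => hU (eventually_ge_atTop k)
  have hGt : ∀ b, ∀ k : ℕ, ∀ᶠ N in (𝓤 : Filter ℕ), k ≤ G N b := by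
    intro b k
    filter_upwards [hge (4 * k)] with N hN
    have := hD.d1 N
    have := hD.d2 N b
    omega
  by_cases hP : ∀ i j : ℤ, (i ≠ 0 ∨ j ≠ 0) → ∀ D : ℕ, ∀ᶠ N in (𝓤 : Filter ℕ),
      (D : ℤ) < |i * (G N true : ℤ) + j * (G N false : ℤ)|
  · -- independent case
    refine assemble x hirr halg q hq C nn G w y g h κ hD 𝓤 hU (r := 2) (fun N => min (G N true) (G N false)) 4
      (fun N => ![G N true, G N false]) (Eventually.of_forall fun N => min_le_left _ _) ?_ ?_ ?_ ?_
      (fun b => if b then Finsupp.single 0 1 else Finsupp.single 1 1) (fun _ => 1) ?_ (fun _ => one_ne_zero) ?_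
    · refine Eventually.of_forall fun N => ?_
      have := hD.d2 N true
      have := hD.d2 N false
      show nn N ≤ 4 * min _ _
      omega
    · refine Eventually.of_forall fun N i => ?_
      fin_cases i <;> simp
    · refine Eventually.of_forall fun N i => ?_
      fin_cases i
      · exact hD.d3 N true
      · exact hD.d3 N false
    · intro γ γ' hne D
      have hne' : ((γ 0 : ℤ) - γ' 0 ≠ 0) ∨ ((γ 1 : ℤ) - γ' 1 ≠ 0) := by
        by_contra! hc
        apply hne
        ext i
        fin_cases i
        · have := hc.1; show γ 0 = γ' 0; omega
        · have := hc.2; show γ 1 = γ' 1; omega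
      filter_upwards [hP _ _ hne' D] with N hN
      have e : ∀ γ : Fin 2 →₀ ℕ, mw ![G N true, G N false] γ = γ 0 * G N true + γ 1 * G N false := by
        intro γ; simp [mw, Fin.sum_univ_two]
      rw [e, e]
      rcases lt_abs.1 hN with h1 | h1
      · right; zify; linarith
      · left; zify; linarith
    · intro b
      cases b <;> simp
    · refine Eventually.of_forall fun N b => ?_
      cases b <;> simp [mw, Fin.sum_univ_two]
  · -- dependent case
    push Not at hP
    obtain ⟨i, j, hij, D, hD0⟩ := hP
    have hD1 : ∀ᶠ N in (𝓤 : Filter ℕ), |i * (G N true : ℤ) + j * (G N false : ℤ)| ≤ D := by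
      have := hD0
      simpa using this
    obtain ⟨δ, -, hδ⟩ := uf_exists 𝓤 (Finset.Icc (-(D : ℤ)) D)
      (fun N d => i * (G N true : ℤ) + j * (G N false : ℤ) = d) (by
        filter_upwards [hD1] with N hN
        exact ⟨_, Finset.mem_Icc.2 (abs_le.1 hN), rfl⟩)
    obtain ⟨i', j', δ', hi', hj', hrel⟩ : ∃ (i' j' : ℕ) (δ' : ℤ), 1 ≤ i' ∧ 1 ≤ j' ∧
        ∀ᶠ N in (𝓤 : Filter ℕ), (j' : ℤ) * G N true = i' * G N false + δ' := by
      have hbig : ∀ᶠ N in (𝓤 : Filter ℕ), (|δ| + 1 ≤ (G N true : ℤ) ∧ |δ| + 1 ≤ (G N false : ℤ)) ∧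
          i * (G N true : ℤ) + j * (G N false : ℤ) = δ := by
        filter_upwards [hGt true (δ.natAbs + 1), hGt false (δ.natAbs + 1), hδ] with N h1 h2 h3
        rw [Int.abs_eq_natAbs]
        refine ⟨⟨?_, ?_⟩, h3⟩ <;> omega
      obtain ⟨N, ⟨h1, h2⟩, h3⟩ := hbig.exists
      have k0 := abs_nonneg δ
      have k1 := le_abs_self δ
      have k2 := neg_abs_le δ
      rcases lt_trichotomy i 0 with hi | hi | hi
      · rcases lt_trichotomy j 0 with hj | hj | hj
        · exfalso; nlinarith
        · exfalso; subst hj; nlinarith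
        · refine ⟨j.toNat, (-i).toNat, -δ, by omega, by omega, ?_⟩
          filter_upwards [hδ] with N hN
          rw [Int.toNat_of_nonneg (by omega), Int.toNat_of_nonneg (by omega)]
          linarith
      · subst hi
        have hj0 : j ≠ 0 := by simpa using hij
        exfalso
        rcases lt_or_gt_of_ne hj0 with hj | hj <;> nlinarith
      · rcases lt_trichotomy j 0 with hj | hj | hj
        · refine ⟨(-j).toNat, i.toNat, δ, by omega, by omega, ?_⟩
          filter_upwards [hδ] with N hN
          rw [Int.toNat_of_nonneg (by omega), Int.toNat_of_nonneg (by omega)]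
          linarith
        · exfalso; subst hj; nlinarith
        · exfalso; nlinarith
    obtain ⟨R1, hR1, hR⟩ := uf_exists 𝓤 (Finset.range i') (fun N a => G N true % i' = a)
      (Eventually.of_forall fun N => ⟨_, Finset.mem_range.2 (Nat.mod_lt _ (by omega)), rfl⟩)
    set M : ℕ → ℕ := fun N => G N true / i' with hM
    have hM1 : ∀ᶠ N in (𝓤 : Filter ℕ), G N true = i' * M N + R1 := by
      filter_upwards [hR] with N hN
      rw [← hN, hM]
      exact (Nat.div_add_mod _ _).symm
    set R2 : ℤ := ((j' : ℤ) * R1 - δ') / i' with hR2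
    have hM2 : ∀ᶠ N in (𝓤 : Filter ℕ), (G N false : ℤ) = j' * M N + R2 := by
      filter_upwards [hM1, hrel] with N h1 h2
      have h3 : (j' : ℤ) * R1 - δ' = i' * ((G N false : ℤ) - j' * M N) := by
        rw [h1] at h2; push_cast at h2; linarith
      rw [hR2, h3, Int.mul_ediv_cancel_left _ (by omega)]; ring
    have hMt : ∀ k : ℕ, ∀ᶠ N in (𝓤 : Filter ℕ), k ≤ M N := by
      intro k
      filter_upwards [hGt true (k * i')] with N hN
      exact (Nat.le_div_iff_mul_le (by omega)).2 hN
    refine assemble x hirr halg q hq C nn G w y g h κ hD 𝓤 hU (r := 1) M (4 * i' + 4 * R1)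
      (fun N _ => M N) (Eventually.of_forall fun N => Nat.div_le_self _ _) ?_
      (Eventually.of_forall fun N i => le_rfl)
      (Eventually.of_forall fun N i => (Nat.div_le_self _ _).trans (hD.d3 N true)) ?_
      (fun b => if b then Finsupp.single 0 i' else Finsupp.single 0 j')
      (fun b => if b then ((q : ℚ) ^ R1)⁻¹ else (q : ℚ) ^ (-R2)) ?_ ?_ ?_
    · filter_upwards [hM1, hMt 1] with N h1 h2
      have := hD.d2 N true
      nlinarith
    · intro γ γ' hne D
      have hne' : γ 0 ≠ γ' 0 := by
        intro hc
        apply hne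
        refine Finsupp.ext fun t => ?_
        rw [Subsingleton.elim t 0]
        exact hc
      filter_upwards [hMt (D + 1)] with N hN
      have e : ∀ γ : Fin 1 →₀ ℕ, mw (fun _ => M N) γ = γ 0 * M N := by
        intro γ; simp [mw]
      rw [e, e]
      rcases lt_or_gt_of_ne hne' with h1 | h1
      · left; nlinarith
      · right; nlinarith
    · intro b
      cases b <;> simp <;> omega
    · intro b
      cases b
      · simpa using zpow_ne_zero _ hq0'
      · simpa using pow_ne_zero _ hq0'
    · filter_upwards [hM1, hM2] with N h1 h2 b
      have e : ∀ k : ℕ, mw (fun _ => M N) (Finsupp.single (0 : Fin 1) k) = k * M N := by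
        intro γ; simp [mw]
      cases b
      · simp only [Bool.false_eq_true, if_false, e]
        push_cast
        rw [← zpow_natCast (q : ℝ) (G N false), h2, ← zpow_natCast (q : ℝ), zpow_add₀ hq0, zpow_neg]
        push_cast
        rw [mul_inv, mul_comm]
      · simp only [if_true, e]
        push_cast
        rw [h1, pow_add, mul_inv, mul_comm]

/-- If `x ∈ (0,1)` is an irrational algebraic number, then for every base `q ≥ 2` the complexity
function `p` of its base-`q` digit sequence satisfies `liminf (p n - n) = +∞`. -/
theorem complexity_of_algebraic_liminf_sub (x : ℝ) (hx : x ∈ Set.Ioo (0 : ℝ) 1)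
    (hirr : Irrational x) (halg : IsAlgebraic ℚ x) :
    ∀ q : ℕ, 2 ≤ q →
      Filter.liminf
        (fun n : ℕ => (((qComplexity q x n : ℝ) - (n : ℝ) : ℝ) : EReal)) Filter.atTop = ⊤ := by
  intro q hq
  by_contra hne
  have hlt := lt_top_iff_ne_top.2 hne
  obtain ⟨R, hR1, -⟩ := EReal.lt_iff_exists_real_btwn.1 hlt
  have hfr := Filter.frequently_lt_of_liminf_lt (by isBoundedDefault) hR1
  obtain ⟨C0, hC0⟩ := exists_nat_ge R
  have hcxe : ∀ n, qComplexity q x n = cx (qdigit q x) n := by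
    intro n
    unfold qComplexity cx
    congr 1
    ext w
    simp only [Set.mem_setOf_eq, Set.mem_range, wrd]
    constructor
    · rintro ⟨k, hk⟩; exact ⟨k, funext hk⟩
    · rintro ⟨k, hk⟩; exact ⟨k, fun i => congrFun hk i⟩
  have hC : ∃ᶠ n in atTop, cx (qdigit q x) n ≤ n + C0 := by
    refine hfr.mono fun n hn => ?_
    rw [EReal.coe_lt_coe_iff, hcxe] at hn
    have : (cx (qdigit q x) n : ℝ) ≤ n + C0 := by linarith
    exact_mod_cast this
  obtain ⟨C, nn, G, w, y, g, h, κ, hD⟩ := dat_ex x hx hirr q hq C0 hC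
  exact dat_false x hirr halg q hq C nn G w y g h κ hD
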